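/- arXiv:1109.4774 — 2 statements merged into one kernel-verified Lean document; each statement's English description precedes it below -/
import Mathlib

section
/- Let V be an n-dimensional vector space over a field F of characteristic 0, let 0 ≠ vol ∈ Λⁿ V*, let k ∈ {1,…,n−1}, and let δ : Λ^k V → Λ^{n−k} V* be the dual isomorphism δ(X) := X ⌟ vol. Then: (i) if X ∈ Λ^k V satisfies r(X) = 0, then ρ(δ(X)) < n; (ii) if X ∈ Λ^k V satisfies ρ(X) = n and r(X) > 0, then ρ(δ(X)) = n, m(δ(X)) = r(X), and r(δ(X)) = m(X). -/
open Module

section Machinery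

variable {F : Type*} [Field F] {M : Type*} [AddCommGroup M] [Module F M]

/-- `X` is a decomposable `k`-vector, with factors taken from the ambient subspace `A`. -/
def Dec (A : Submodule F M) (k : ℕ) (X : ExteriorAlgebra F M) : Prop :=
  ∃ v : Fin k → M, (∀ i, v i ∈ A) ∧ X = (List.ofFn fun i => ExteriorAlgebra.ι F (v i)).prod

/-- `X` is a sum of `l` decomposable `k`-vectors with factors from `A`. -/
def LenLE (A : Submodule F M) (k l : ℕ) (X : ExteriorAlgebra F M) : Prop :=
  ∃ Y : Fin l → ExteriorAlgebra F M, (∀ i, Dec A k (Y i)) ∧ X = ∑ i, Y i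

/-- `X` has (irreducible) length `l` as a `k`-vector: it is a sum of `l` decomposable
`k`-vectors, and of no smaller number of them. -/
def HasLen (A : Submodule F M) (k l : ℕ) (X : ExteriorAlgebra F M) : Prop :=
  LenLE A k l X ∧ ∀ j < l, ¬ LenLE A k j X

/-- The (irreducible) length of the `k`-vector `X`. -/
noncomputable def len (A : Submodule F M) (k : ℕ) (X : ExteriorAlgebra F M) : ℕ :=
  sInf {l | LenLE A k l X}

/-- `X` belongs to `Λ^k W`, regarded as a subspace of the exterior algebra. -/
def memPow (W : Submodule F M) (k : ℕ) (X : ExteriorAlgebra F M) : Prop :=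
  X ∈ (W.map (ExteriorAlgebra.ι F)) ^ k

/-- The support `[X]` of the `k`-vector `X`: the intersection of all subspaces `W`
with `X ∈ Λ^k W`. -/
noncomputable def supp (k : ℕ) (X : ExteriorAlgebra F M) : Submodule F M :=
  sInf {W | memPow W k X}

/-- The rank `ρ(X) = dim [X]` of the `k`-vector `X`. -/
noncomputable def rkInv (k : ℕ) (X : ExteriorAlgebra F M) : ℕ :=
  Module.finrank F (supp k X)

/-- `(v, W, X₁, X₂)` is an admissible splitting `X = X₁ ∧ v + X₂` of the `k`-vector `X`:
`v ∈ [X] ∖ {0}`, `W` is a complement of `span v` in `[X]`, `X₁ ∈ Λ^(k-1) W` and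
`X₂ ∈ Λ^k W`. -/
def Split (k : ℕ) (X : ExteriorAlgebra F M) (v : M) (W : Submodule F M)
    (X₁ X₂ : ExteriorAlgebra F M) : Prop :=
  v ∈ supp k X ∧ v ≠ 0 ∧
    W ⊔ Submodule.span F {v} = supp k X ∧ W ⊓ Submodule.span F {v} = ⊥ ∧
    memPow W (k - 1) X₁ ∧ memPow W k X₂ ∧
    X = X₁ * ExteriorAlgebra.ι F v + X₂

/-- The invariant `m(X) = min { l(X₁) }` over all admissible splittings of `X`. -/
noncomputable def mInv (A : Submodule F M) (k : ℕ) (X : ExteriorAlgebra F M) : ℕ :=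
  sInf {l | ∃ v W X₁ X₂, Split k X v W X₁ X₂ ∧ HasLen A (k - 1) l X₁}

/-- The invariant `r(X) = min { l(X₂) }` over all admissible splittings of `X`. -/
noncomputable def rInv (A : Submodule F M) (k : ℕ) (X : ExteriorAlgebra F M) : ℕ :=
  sInf {l | ∃ v W X₁ X₂, Split k X v W X₁ X₂ ∧ HasLen A k l X₂}

end Machinery

section Eval

variable {F : Type*} [Field F] {V : Type*} [AddCommGroup V] [Module F V]

/-- Evaluation of an element of the exterior algebra of the dual space (in degree `m`)
on an `m`-tuple of vectors, via the determinant pairing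
`(φ₁ ∧ … ∧ φ_m)(v₁,…,v_m) = det (φ_i (v_j))`. -/
noncomputable def evalForm (m : ℕ) (Ψ : ExteriorAlgebra F (Module.Dual F V))
    (v : Fin m → V) : F :=
  ExteriorAlgebra.liftAlternating
    (Pi.single m
      ((Matrix.detRowAlternating :
          (Fin m → F) [⋀^Fin m]→ₗ[F] F).compLinearMap
        (LinearMap.pi fun j => Module.Dual.eval F V (v j)))) Ψ

end Eval

section Part1

variable {F : Type*} [Field F] {M : Type*} [AddCommGroup M] [Module F M]

/-- Contraction. -/
noncomputable def con (φ : Module.Dual F M) : ExteriorAlgebra F M →ₗ[F] ExteriorAlgebra F M :=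
  CliffordAlgebra.contractLeft (Q := (0 : QuadraticForm F M)) φ

lemma con_ι_mul (φ : Module.Dual F M) (v : M) (X : ExteriorAlgebra F M) :
    con φ (ExteriorAlgebra.ι F v * X) = φ v • X - ExteriorAlgebra.ι F v * con φ X :=
  CliffordAlgebra.contractLeft_ι_mul φ v X

lemma con_alg (φ : Module.Dual F M) (r : F) :
    con φ (algebraMap F (ExteriorAlgebra F M) r) = 0 :=
  CliffordAlgebra.contractLeft_algebraMap _ φ r

lemma con_one (φ : Module.Dual F M) :
    con φ (1 : ExteriorAlgebra F M) = 0 :=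
  CliffordAlgebra.contractLeft_one _ φ

lemma con_con (φ : Module.Dual F M) (X : ExteriorAlgebra F M) :
    con φ (con φ X) = 0 :=
  CliffordAlgebra.contractLeft_contractLeft φ X

lemma ι_ι_mul (v : M) (X : ExteriorAlgebra F M) :
    ExteriorAlgebra.ι F v * (ExteriorAlgebra.ι F v * X) = 0 := by
  rw [← mul_assoc, ExteriorAlgebra.ι_sq_zero, zero_mul]

lemma ι_anti (v w : M) :
    ExteriorAlgebra.ι F v * ExteriorAlgebra.ι F w
      = - (ExteriorAlgebra.ι F w * ExteriorAlgebra.ι F v) := by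
  rw [eq_neg_iff_add_eq_zero]
  exact ExteriorAlgebra.ι_add_mul_swap v w

lemma pow_ind {W : Submodule F M} {C : ℕ → ExteriorAlgebra F M → Prop}
    (h0 : ∀ r, C 0 (algebraMap F _ r)) (hadd : ∀ i x y, C i x → C i y → C i (x + y))
    (hmul : ∀ i, ∀ w ∈ W, ∀ x, memPow W i x → C i x → C (i + 1) (ExteriorAlgebra.ι F w * x))
    {k : ℕ} {X : ExteriorAlgebra F M} (h : memPow W k X) : C k X := by
  unfold memPow at h
  induction h using Submodule.pow_induction_on_left' with
  | algebraMap r => exact h0 r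
  | add x y i hx hy h1 h2 => exact hadd _ _ _ h1 h2
  | mem_mul m hm i x hx ih =>
    obtain ⟨w, hw, rfl⟩ := hm
    exact hmul i w hw x hx ih

lemma memPow_add {W : Submodule F M} {k : ℕ} {X Y : ExteriorAlgebra F M}
    (h : memPow W k X) (h' : memPow W k Y) : memPow W k (X + Y) :=
  Submodule.add_mem _ h h'

lemma memPow_sub {W : Submodule F M} {k : ℕ} {X Y : ExteriorAlgebra F M}
    (h : memPow W k X) (h' : memPow W k Y) : memPow W k (X - Y) :=
  Submodule.sub_mem _ h h'

lemma memPow_smul {W : Submodule F M} {k : ℕ} {X : ExteriorAlgebra F M} (c : F)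
    (h : memPow W k X) : memPow W k (c • X) :=
  Submodule.smul_mem _ _ h

lemma memPow_ι_mul {W : Submodule F M} {k : ℕ} {X : ExteriorAlgebra F M} {w : M} (hw : w ∈ W)
    (h : memPow W k X) : memPow W (k + 1) (ExteriorAlgebra.ι F w * X) := by
  unfold memPow at *
  rw [pow_succ']
  exact Submodule.mul_mem_mul ⟨w, hw, rfl⟩ h

lemma memPow_alg (W : Submodule F M) (r : F) : memPow W 0 (algebraMap F _ r) := by
  unfold memPow
  rw [pow_zero]
  exact Submodule.mem_one.2 ⟨r, rfl⟩

lemma memPow_zero_iff {W : Submodule F M} {X : ExteriorAlgebra F M} (h : memPow W 0 X) :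
    ∃ r, X = algebraMap F _ r := by
  unfold memPow at h
  rw [pow_zero] at h
  obtain ⟨r, hr⟩ := Submodule.mem_one.1 h
  exact ⟨r, hr.symm⟩

lemma memPow_mono {W W' : Submodule F M} (hW : W ≤ W') {k : ℕ} {X : ExteriorAlgebra F M}
    (h : memPow W k X) : memPow W' k X :=
  pow_le_pow_left' (Submodule.map_mono (f := ExteriorAlgebra.ι F) hW) k h

lemma memPow_top {k : ℕ} {X : ExteriorAlgebra F M} : memPow ⊤ k X ↔ X ∈ ⋀[F]^k M := by
  unfold memPow
  rw [Submodule.map_top]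

lemma memPow_bot {k : ℕ} {X : ExteriorAlgebra F M} (h : memPow ⊥ (k + 1) X) : X = 0 := by
  unfold memPow at h
  rw [Submodule.map_bot] at h
  rw [pow_succ', Submodule.bot_mul] at h
  simpa using h

lemma memPow_map {W : Submodule F M} (p : M →ₗ[F] M) {k : ℕ} {X : ExteriorAlgebra F M}
    (h : memPow W k X) : memPow (W.map p) k (ExteriorAlgebra.map p X) := by
  refine pow_ind (C := fun k X => memPow (W.map p) k (ExteriorAlgebra.map p X)) ?_ ?_ ?_ h
  · intro r
    rw [AlgHom.commutes]; exact memPow_alg _ _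
  · intro i x y hx hy
    rw [map_add]; exact memPow_add hx hy
  · intro i w hw x _ ih
    rw [map_mul, ExteriorAlgebra.map_apply_ι]
    exact memPow_ι_mul (Submodule.mem_map_of_mem hw) ih

lemma con_memPow {W : Submodule F M} (φ : Module.Dual F M) {k : ℕ} {X : ExteriorAlgebra F M}
    (h : memPow W k X) : memPow W (k - 1) (con φ X) ∧ (k = 0 → con φ X = 0) := by
  refine pow_ind (C := fun k X => memPow W (k - 1) (con φ X) ∧ (k = 0 → con φ X = 0)) ?_ ?_ ?_ h
  · intro r
    rw [con_alg]
    exact ⟨Submodule.zero_mem _, fun _ => rfl⟩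
  · intro i x y hx hy
    rw [map_add]
    refine ⟨memPow_add hx.1 hy.1, fun h => by rw [hx.2 h, hy.2 h, add_zero]⟩
  · intro i w hw x hx ih
    rw [con_ι_mul]
    refine ⟨?_, by simp⟩
    simp only [Nat.add_sub_cancel]
    refine memPow_sub (memPow_smul _ hx) ?_
    rcases i with _ | i
    · rw [ih.2 rfl, mul_zero]; exact Submodule.zero_mem _
    · exact memPow_ι_mul hw ih.1

lemma con_eq_zero {W : Submodule F M} (φ : Module.Dual F M) (hφ : ∀ w ∈ W, φ w = 0) {k : ℕ}
    {X : ExteriorAlgebra F M} (h : memPow W k X) : con φ X = 0 := by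
  refine pow_ind (C := fun k X => con φ X = 0) ?_ ?_ ?_ h
  · intro r; exact con_alg _ _
  · intro i x y hx hy
    rw [map_add, hx, hy, add_zero]
  · intro i w hw x hx ih
    rw [con_ι_mul, ih, hφ w hw]; simp

/-- projection along `v` -/
noncomputable def prj (φ : Module.Dual F M) (v : M) : M →ₗ[F] M :=
  LinearMap.id - φ.smulRight v

lemma prj_apply (φ : Module.Dual F M) (v x : M) : prj φ v x = x - φ x • v := by
  simp [prj]

lemma prj_decomp (φ : Module.Dual F M) (v : M) (hv : φ v = 1) (X : ExteriorAlgebra F M) :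
    X = ExteriorAlgebra.map (prj φ v) X + ExteriorAlgebra.ι F v * con φ X := by
  induction X using CliffordAlgebra.left_induction with
  | algebraMap r =>
    erw [AlgHom.commutes, con_alg]; simp
  | add x y hx hy =>
    rw [map_add, map_add, mul_add]
    nth_rw 1 [hx, hy]; abel
  | ι_mul x w hx =>
    change ExteriorAlgebra.ι F w * x = ExteriorAlgebra.map (prj φ v) (ExteriorAlgebra.ι F w * x) +
      ExteriorAlgebra.ι F v * con φ (ExteriorAlgebra.ι F w * x)
    have h1 : ExteriorAlgebra.ι F v * x
        = ExteriorAlgebra.ι F v * ExteriorAlgebra.map (prj φ v) x := by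
      conv_lhs => rw [hx]
      rw [mul_add, ι_ι_mul, add_zero]
    rw [con_ι_mul, map_mul, ExteriorAlgebra.map_apply_ι, prj_apply, map_sub, map_smul, mul_sub,
      sub_mul, mul_smul_comm, h1, smul_mul_assoc, ← mul_assoc, ι_anti v w, neg_mul, mul_assoc]
    nth_rw 1 [hx]
    rw [mul_add]; abel

lemma con_ι_mul_eq_map (φ : Module.Dual F M) (v : M) (hv : φ v = 1) (X : ExteriorAlgebra F M) :
    con φ (ExteriorAlgebra.ι F v * X) = ExteriorAlgebra.map (prj φ v) X := by
  rw [con_ι_mul, hv, one_smul]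
  nth_rw 1 [prj_decomp φ v hv X]
  abel

lemma eq_map_of_con (φ : Module.Dual F M) (v : M) (hv : φ v = 1) (X : ExteriorAlgebra F M)
    (h : con φ X = 0) : X = ExteriorAlgebra.map (prj φ v) X := by
  nth_rw 1 [prj_decomp φ v hv X]
  rw [h, mul_zero, add_zero]

lemma mul_ι_comm {W : Submodule F M} {k : ℕ} {X : ExteriorAlgebra F M} (h : memPow W k X) (v : M) :
    X * ExteriorAlgebra.ι F v = (-1 : F) ^ k • (ExteriorAlgebra.ι F v * X) := by
  refine pow_ind (C := fun k X => X * ExteriorAlgebra.ι F v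
      = (-1 : F) ^ k • (ExteriorAlgebra.ι F v * X)) ?_ ?_ ?_ h
  · intro r; rw [pow_zero, one_smul, Algebra.commutes]
  · intro i x y hx hy
    rw [add_mul, hx, hy, mul_add, smul_add]
  · intro i w hw x hx ih
    rw [mul_assoc, ih, mul_smul_comm, ← mul_assoc, ← mul_assoc, ι_anti v w, pow_succ]
    simp

variable [FiniteDimensional F M]

lemma exists_dual_of_notMem {W : Submodule F M} {w : M} (hw : w ∉ W) :
    ∃ φ : Module.Dual F M, φ w = 1 ∧ ∀ x ∈ W, φ x = 0 := by
  obtain ⟨f, hf, hW⟩ := Submodule.exists_dual_map_eq_bot_of_notMem hw inferInstance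
  refine ⟨(f w)⁻¹ • f, by simp [hf], fun x hx => ?_⟩
  have : f x ∈ W.map f := Submodule.mem_map_of_mem hx
  rw [hW] at this
  simp [(Submodule.mem_bot F).1 this]

lemma supp_le {W : Submodule F M} {k : ℕ} {X : ExteriorAlgebra F M} (h : memPow W k X) :
    supp k X ≤ W := sInf_le h

lemma mem_supp {k : ℕ} {X : ExteriorAlgebra F M} (h : memPow ⊤ k X) :
    memPow (supp k X) k X := by
  obtain ⟨W, hW, hmin⟩ := WellFounded.has_min (wellFounded_lt (α := Submodule F M))
    {W | memPow W k X} ⟨⊤, h⟩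
  have : supp k X = W := by
    apply le_antisymm (supp_le hW)
    refine le_sInf fun W' hW' => ?_
    by_contra hn
    obtain ⟨w, hw, hw'⟩ := Set.not_subset.1 hn
    obtain ⟨φ, h1, h2⟩ := exists_dual_of_notMem hw'
    have hX := eq_map_of_con φ w h1 X (con_eq_zero φ h2 hW')
    have h3 : memPow (W.map (prj φ w)) k X := by
      rw [hX]; exact memPow_map _ hW
    refine hmin _ h3 (lt_of_le_of_ne ?_ ?_)
    · rintro _ ⟨x, hx, rfl⟩
      rw [prj_apply]
      exact sub_mem hx (W.smul_mem _ hw)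
    · intro heq
      have hw2 : w ∈ W.map (prj φ w) := by rw [heq]; exact hw
      obtain ⟨x, -, hx⟩ := hw2
      have := congrArg φ hx
      rw [prj_apply] at this
      simp [h1] at this
  rw [this]; exact hW

/-- support is proper iff killed by a functional -/
lemma supp_ne_top_iff {k : ℕ} {X : ExteriorAlgebra F M} (h : memPow ⊤ k X) :
    supp k X ≠ ⊤ ↔ ∃ φ : Module.Dual F M, φ ≠ 0 ∧ con φ X = 0 := by
  constructor
  · intro hne
    obtain ⟨w, hw⟩ : ∃ w, w ∉ supp k X := by
      by_contra hc; push Not at hc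
      exact hne (Submodule.eq_top_iff'.2 hc)
    obtain ⟨φ, h1, h2⟩ := exists_dual_of_notMem hw
    refine ⟨φ, fun h0 => ?_, con_eq_zero φ h2 (mem_supp h)⟩
    rw [h0] at h1; simp at h1
  · rintro ⟨φ, h0, hc⟩ htop
    obtain ⟨w, hw⟩ : ∃ w, φ w = 1 := by
      obtain ⟨w, hw⟩ := DFunLike.ne_iff.1 h0
      exact ⟨(φ w)⁻¹ • w, by simp at hw; simp [hw]⟩
    have h3 : memPow ((⊤ : Submodule F M).map (prj φ w)) k X := by
      rw [eq_map_of_con φ w hw X hc]; exact memPow_map _ h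
    have h4 : w ∈ (⊤ : Submodule F M).map (prj φ w) := supp_le h3 (htop ▸ trivial)
    obtain ⟨x, -, hx⟩ := h4
    have := congrArg φ hx
    rw [prj_apply] at this
    simp [hw] at this

lemma eq_zero_of_con {k : ℕ} {X : ExteriorAlgebra F M} (h : memPow ⊤ (k + 1) X)
    (hc : ∀ φ : Module.Dual F M, con φ X = 0) : X = 0 := by
  have hS := mem_supp h
  by_cases hb : supp (k + 1) X = ⊥
  · rw [hb] at hS; exact memPow_bot hS
  · obtain ⟨w, hw, hw0⟩ := Submodule.exists_mem_ne_zero_of_ne_bot hb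
    obtain ⟨φ, h1, -⟩ := exists_dual_of_notMem (F := F) (W := ⊥) (w := w) (by simpa using hw0)
    have h3 : memPow ((⊤ : Submodule F M).map (prj φ w)) (k + 1) X := by
      rw [eq_map_of_con φ w h1 X (hc φ)]; exact memPow_map _ h
    obtain ⟨x, -, hx⟩ := supp_le h3 hw
    have := congrArg φ hx
    rw [prj_apply] at this
    simp [h1] at this

/-- the canonical splittings -/
lemma split_of {k : ℕ} {X : ExteriorAlgebra F M} (h : memPow ⊤ k X)
    (φ : Module.Dual F M) (v : M) (hv : φ v = 1) (hvS : v ∈ supp k X) :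
    Split k X v (supp k X ⊓ LinearMap.ker φ) ((-1 : F) ^ (k - 1) • con φ X)
      (con φ (ExteriorAlgebra.ι F v * X)) := by
  have hS := mem_supp h
  have hmap : (supp k X).map (prj φ v) ≤ supp k X ⊓ LinearMap.ker φ := by
    rintro _ ⟨x, hx, rfl⟩
    rw [prj_apply]
    refine ⟨sub_mem hx (Submodule.smul_mem _ _ hvS), ?_⟩
    simp [hv]
  have hc := (con_memPow φ hS).1
  refine ⟨hvS, ?_, ?_, ?_, ?_, ?_, ?_⟩
  · rintro rfl; simp at hv
  · apply le_antisymm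
    · refine sup_le inf_le_left ?_
      rw [Submodule.span_singleton_le_iff_mem]; exact hvS
    · intro x hx
      have : x = (prj φ v x) + φ x • v := by rw [prj_apply]; abel
      rw [this]
      exact Submodule.add_mem_sup (hmap ⟨x, hx, rfl⟩)
        (Submodule.smul_mem _ _ (Submodule.mem_span_singleton_self v))
  · rw [eq_bot_iff]
    rintro x ⟨⟨-, hx⟩, hx2⟩
    obtain ⟨c, rfl⟩ := Submodule.mem_span_singleton.1 hx2
    have hx' : φ (c • v) = 0 := hx
    simp [hv] at hx'
    simp [hx']
  · apply memPow_smul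
    rw [eq_map_of_con φ v hv _ (con_con φ X)]
    exact memPow_mono hmap (memPow_map _ hc)
  · rw [con_ι_mul_eq_map φ v hv]
    exact memPow_mono hmap (memPow_map _ hS)
  · rw [smul_mul_assoc, mul_ι_comm hc, smul_smul, ← mul_pow, con_ι_mul, hv]
    simp

lemma split_elim {k : ℕ} {X X₁ X₂ : ExteriorAlgebra F M} {v : M} {W : Submodule F M}
    (h : Split k X v W X₁ X₂) :
    ∃ φ : Module.Dual F M, φ v = 1 ∧ X₁ = (-1 : F) ^ (k - 1) • con φ X ∧
      X₂ = con φ (ExteriorAlgebra.ι F v * X) := by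
  obtain ⟨hvS, hv0, hsup, hinf, h1, h2, hX⟩ := h
  have hvW : v ∉ W := by
    intro hv
    have : v ∈ W ⊓ Submodule.span F {v} := ⟨hv, Submodule.mem_span_singleton_self v⟩
    rw [hinf] at this
    exact hv0 (by simpa using this)
  obtain ⟨φ, hv, hφ⟩ := exists_dual_of_notMem hvW
  have e1 : con φ X₁ = 0 := con_eq_zero φ hφ h1
  have e2 : con φ X₂ = 0 := con_eq_zero φ hφ h2
  refine ⟨φ, hv, ?_, ?_⟩
  · rw [hX, map_add, e2, mul_ι_comm h1, map_smul, con_ι_mul, e1, hv, add_zero, smul_smul,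
      ← mul_pow]
    simp
  · rw [hX, mul_add, mul_ι_comm h1, mul_smul_comm, ι_ι_mul, smul_zero, zero_add, con_ι_mul, e2, hv]
    simp

end Part1

section Part2

variable {F : Type*} [Field F] {M : Type*} [AddCommGroup M] [Module F M]
variable {N : Type*} [AddCommGroup N] [Module F N]

lemma dec_zero {X : ExteriorAlgebra F M} : Dec (⊤ : Submodule F M) 0 X ↔ X = 1 := by
  constructor
  · rintro ⟨v, -, rfl⟩; simp
  · rintro rfl; exact ⟨Fin.elim0, by simp, by simp⟩

lemma dec_succ {k : ℕ} {X : ExteriorAlgebra F M} : Dec (⊤ : Submodule F M) (k + 1) X ↔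
    ∃ (x : M) (X' : ExteriorAlgebra F M), Dec (⊤ : Submodule F M) k X' ∧
      X = ExteriorAlgebra.ι F x * X' := by
  constructor
  · rintro ⟨v, -, rfl⟩
    refine ⟨v 0, _, ⟨fun i => v i.succ, by simp, rfl⟩, ?_⟩
    simp [List.ofFn_succ]
  · rintro ⟨x, _, ⟨v, -, rfl⟩, rfl⟩
    refine ⟨Fin.cons x v, by simp, ?_⟩
    simp [List.ofFn_succ]

lemma dec_smul {k : ℕ} {X : ExteriorAlgebra F M} (c : F) (h : Dec (⊤ : Submodule F M) (k + 1) X) :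
    Dec (⊤ : Submodule F M) (k + 1) (c • X) := by
  obtain ⟨x, X', h', rfl⟩ := dec_succ.1 h
  exact dec_succ.2 ⟨c • x, X', h', by simp⟩

lemma dec_map {k : ℕ} (p : M →ₗ[F] M) {X : ExteriorAlgebra F M}
    (h : Dec (⊤ : Submodule F M) k X) : Dec (⊤ : Submodule F M) k (ExteriorAlgebra.map p X) := by
  induction k generalizing X with
  | zero => rw [dec_zero] at *; rw [h, map_one]
  | succ k ih =>
    obtain ⟨x, X', h', rfl⟩ := dec_succ.1 h
    refine dec_succ.2 ⟨p x, _, ih h', ?_⟩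
    rw [map_mul, ExteriorAlgebra.map_apply_ι]

lemma dec_con {k : ℕ} (φ : Module.Dual F M) {X : ExteriorAlgebra F M}
    (h : Dec (⊤ : Submodule F M) (k + 2) X) : Dec (⊤ : Submodule F M) (k + 1) (con φ X) := by
  induction k generalizing X with
  | zero =>
    obtain ⟨x, X', h', rfl⟩ := dec_succ.1 h
    obtain ⟨y, X'', h'', rfl⟩ := dec_succ.1 h'
    rw [dec_zero] at h''
    subst h''
    refine dec_succ.2 ⟨φ x • y - φ y • x, 1, dec_zero.2 rfl, ?_⟩
    rw [con_ι_mul, con_ι_mul, con_one]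
    simp
  | succ k ih =>
    obtain ⟨x, X', h', rfl⟩ := dec_succ.1 h
    by_cases hx : φ x = 0
    · rw [con_ι_mul, hx, zero_smul, zero_sub]
      exact dec_succ.2 ⟨-x, _, ih h', by simp⟩
    · have e : ExteriorAlgebra.ι F x * X'
          = φ x • (ExteriorAlgebra.ι F ((φ x)⁻¹ • x) * X') := by
        rw [map_smul, smul_mul_assoc, smul_smul, mul_inv_cancel₀ hx, one_smul]
      rw [e, map_smul, con_ι_mul_eq_map φ _ (by simp [hx])]
      exact dec_smul _ (dec_map _ h')

lemma dec_memPow {k : ℕ} {X : ExteriorAlgebra F M}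
    (h : Dec (⊤ : Submodule F M) k X) : memPow ⊤ k X := by
  induction k generalizing X with
  | zero =>
    rw [dec_zero] at h; rw [h, ← map_one (algebraMap F _)]; exact memPow_alg _ _
  | succ k ih =>
    obtain ⟨x, X', h', rfl⟩ := dec_succ.1 h
    exact memPow_ι_mul trivial (ih h')

lemma lenLE_map {a b l : ℕ} (f : ExteriorAlgebra F M →ₗ[F] ExteriorAlgebra F N)
    (hf : ∀ Z, Dec (⊤ : Submodule F M) a Z → Dec (⊤ : Submodule F N) b (f Z))
    {X : ExteriorAlgebra F M} (h : LenLE (⊤ : Submodule F M) a l X) :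
    LenLE (⊤ : Submodule F N) b l (f X) := by
  obtain ⟨Y, hY, rfl⟩ := h
  exact ⟨fun i => f (Y i), fun i => hf _ (hY i), by rw [map_sum]⟩

lemma lenLE_smul {k l : ℕ} (c : F) {X : ExteriorAlgebra F M}
    (h : LenLE (⊤ : Submodule F M) (k + 1) l X) : LenLE (⊤ : Submodule F M) (k + 1) l (c • X) :=
  lenLE_map (c • LinearMap.id) (fun _ hZ => dec_smul c hZ) h

lemma lenLE_sign {k l j : ℕ} {X : ExteriorAlgebra F M} :
    LenLE (⊤ : Submodule F M) (k + 1) l ((-1 : F) ^ j • X) ↔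
      LenLE (⊤ : Submodule F M) (k + 1) l X := by
  refine ⟨fun h => ?_, lenLE_smul _⟩
  have := lenLE_smul ((-1 : F) ^ j) h
  rwa [smul_smul, ← mul_pow, neg_mul_neg, one_mul, one_pow, one_smul] at this

lemma lenLE_exists {k : ℕ} {X : ExteriorAlgebra F M} (h : memPow ⊤ (k + 1) X) :
    ∃ l, LenLE (⊤ : Submodule F M) (k + 1) l X := by
  rw [memPow_top, ← ExteriorAlgebra.ιMulti_span_fixedDegree] at h
  induction h using Submodule.span_induction with
  | mem x hx =>
    obtain ⟨v, rfl⟩ := hx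
    exact ⟨1, fun _ => ExteriorAlgebra.ιMulti F _ v, fun _ => ⟨v, by simp, rfl⟩, by simp⟩
  | zero => exact ⟨0, Fin.elim0, fun i => i.elim0, by simp⟩
  | add x y _ _ hx hy =>
    obtain ⟨l, Y, hY, rfl⟩ := hx
    obtain ⟨l', Y', hY', rfl⟩ := hy
    refine ⟨l + l', Fin.append Y Y', fun i => ?_, ?_⟩
    · refine Fin.addCases (fun i => ?_) (fun i => ?_) i
      · simpa using hY i
      · simpa using hY' i
    · rw [Fin.sum_univ_add]; simp
  | smul c x _ hx =>
    obtain ⟨l, hl⟩ := hx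
    exact ⟨l, lenLE_smul c hl⟩

lemma hasLen_of_lenLE {A : Submodule F M} {k l : ℕ} {X : ExteriorAlgebra F M}
    (h : LenLE A k l X) : ∃ l' ≤ l, HasLen A k l' X := by
  classical
  have hex : ∃ l, LenLE A k l X := ⟨l, h⟩
  exact ⟨Nat.find hex, Nat.find_min' hex h, Nat.find_spec hex,
    fun j hj => Nat.find_min hex hj⟩

lemma sInf_eq_of {S T : Set ℕ} (h1 : ∀ l ∈ S, ∃ l' ≤ l, l' ∈ T) (h2 : ∀ l ∈ T, ∃ l' ≤ l, l' ∈ S) :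
    sInf S = sInf T := by
  have key : ∀ S T : Set ℕ, (∀ l ∈ S, ∃ l' ≤ l, l' ∈ T) → S.Nonempty → sInf T ≤ sInf S := by
    intro S T h hS
    obtain ⟨l', hl, hl'⟩ := h _ (Nat.sInf_mem hS)
    exact (Nat.sInf_le hl').trans hl
  rcases S.eq_empty_or_nonempty with rfl | hS
  · rcases T.eq_empty_or_nonempty with rfl | ⟨t, ht⟩
    · rfl
    · obtain ⟨l', -, hl⟩ := h2 t ht; exact hl.elim
  · have hT : T.Nonempty := by
      obtain ⟨s, hs⟩ := hS; obtain ⟨l', -, hl⟩ := h1 s hs; exact ⟨l', hl⟩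
    exact le_antisymm (key T S h2 hT) (key S T h1 hS)

variable [FiniteDimensional F M]

lemma mInv_eq {k : ℕ} {X : ExteriorAlgebra F M} (h : memPow ⊤ (k + 2) X)
    (hS : supp (k + 2) X = ⊤) :
    mInv (⊤ : Submodule F M) (k + 2) X =
      sInf {l | ∃ (φ : Module.Dual F M) (v : M), φ v = 1 ∧
        LenLE (⊤ : Submodule F M) (k + 1) l (con φ X)} := by
  apply sInf_eq_of
  · rintro l ⟨v, W, X₁, X₂, hs, hl⟩
    obtain ⟨φ, hv, e1, e2⟩ := split_elim hs
    refine ⟨l, le_rfl, φ, v, hv, ?_⟩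
    have := hl.1
    rw [e1] at this
    exact lenLE_sign.1 this
  · rintro l ⟨φ, v, hv, hl⟩
    obtain ⟨l', hle, hl'⟩ := hasLen_of_lenLE ((lenLE_sign (j := k + 2 - 1)).2 hl)
    exact ⟨l', hle, v, _, _, _, split_of h φ v hv (hS ▸ trivial), hl'⟩

lemma rInv_eq {k : ℕ} {X : ExteriorAlgebra F M} (h : memPow ⊤ k X)
    (hS : supp k X = ⊤) :
    rInv (⊤ : Submodule F M) k X =
      sInf {l | ∃ (φ : Module.Dual F M) (v : M), φ v = 1 ∧
        LenLE (⊤ : Submodule F M) k l (con φ (ExteriorAlgebra.ι F v * X))} := by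
  apply sInf_eq_of
  · rintro l ⟨v, W, X₁, X₂, hs, hl⟩
    obtain ⟨φ, hv, e1, e2⟩ := split_elim hs
    refine ⟨l, le_rfl, φ, v, hv, ?_⟩
    rw [← e2]
    exact hl.1
  · rintro l ⟨φ, v, hv, hl⟩
    obtain ⟨l', hle, hl'⟩ := hasLen_of_lenLE hl
    exact ⟨l', hle, v, _, _, _, split_of h φ v hv (hS ▸ trivial), hl'⟩

/-- `r(X) = 0` gives an annihilating vector -/
lemma rInv_zero {k : ℕ} {X : ExteriorAlgebra F M} (h : memPow ⊤ (k + 1) X) (hX : X ≠ 0)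
    (hr : rInv (⊤ : Submodule F M) (k + 1) X = 0) :
    ∃ v : M, v ≠ 0 ∧ ExteriorAlgebra.ι F v * X = 0 := by
  have hS := mem_supp h
  have hb : supp (k + 1) X ≠ ⊥ := by
    intro hb; rw [hb] at hS; exact hX (memPow_bot hS)
  obtain ⟨w, hw, hw0⟩ := Submodule.exists_mem_ne_zero_of_ne_bot hb
  obtain ⟨φ, h1, -⟩ := exists_dual_of_notMem (F := F) (W := ⊥) (w := w) (by simpa using hw0)
  have hs := split_of h φ w h1 hw
  obtain ⟨l, hl⟩ := lenLE_exists (memPow_mono le_top hs.2.2.2.2.2.1)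
  obtain ⟨l', -, hl'⟩ := hasLen_of_lenLE hl
  have hne : {l | ∃ v W X₁ X₂, Split (k + 1) X v W X₁ X₂ ∧
    HasLen (⊤ : Submodule F M) (k + 1) l X₂}.Nonempty := ⟨l', w, _, _, _, hs, hl'⟩
  have hm := Nat.sInf_mem hne
  unfold rInv at hr
  rw [hr] at hm
  obtain ⟨v, W, X₁, X₂, hsp, ⟨Y, -, hY⟩, -⟩ := hm
  obtain ⟨-, hv0, -, -, m1, -, hXX⟩ := hsp
  refine ⟨v, hv0, ?_⟩
  rw [hXX, hY, mul_ι_comm m1, mul_add, mul_smul_comm, ι_ι_mul]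
  simp

/-- an annihilating vector gives `r(X) = 0` -/
lemma rInv_zero_of {k : ℕ} {X : ExteriorAlgebra F M} (h : memPow ⊤ k X)
    (hS : supp k X = ⊤) {v : M} (hv : v ≠ 0) (hvX : ExteriorAlgebra.ι F v * X = 0) :
    rInv (⊤ : Submodule F M) k X = 0 := by
  obtain ⟨φ, h1, -⟩ := exists_dual_of_notMem (F := F) (W := ⊥) (w := v) (by simpa using hv)
  rw [rInv_eq h hS, Nat.sInf_eq_zero]
  left
  refine ⟨φ, v, h1, ?_⟩
  rw [hvX, map_zero]
  exact ⟨Fin.elim0, fun i => i.elim0, by simp⟩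

lemma supp_one_finrank {X : ExteriorAlgebra F M} (h : memPow ⊤ 1 X) :
    Module.finrank F (supp 1 X) ≤ 1 := by
  have h' := h
  unfold memPow at h'
  rw [pow_one] at h'
  obtain ⟨x, -, rfl⟩ := h'
  have : memPow (Submodule.span F {x}) 1 (ExteriorAlgebra.ι F x) := by
    unfold memPow
    rw [pow_one]
    exact ⟨x, Submodule.mem_span_singleton_self x, rfl⟩
  exact (Submodule.finrank_mono (supp_le this)).trans ((finrank_span_le_card ({x} : Set M)).trans (by simp))

end Part2

section Part3

variable {F : Type*} [Field F] {M : Type*} [AddCommGroup M] [Module F M]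
variable {N : Type*} [AddCommGroup N] [Module F N]

/-- action of the exterior algebra by contractions -/
noncomputable def act (B : M →ₗ[F] Module.Dual F N) :
    ExteriorAlgebra F M →ₐ[F] Module.End F (ExteriorAlgebra F N) :=
  ExteriorAlgebra.lift F ⟨(CliffordAlgebra.contractLeft (Q := (0 : QuadraticForm F N))) ∘ₗ B,
    fun m => LinearMap.ext fun x => con_con (B m) x⟩

lemma act_ι_mul (B : M →ₗ[F] Module.Dual F N) (m : M) (X : ExteriorAlgebra F M)
    (Y : ExteriorAlgebra F N) :
    act B (ExteriorAlgebra.ι F m * X) Y = con (B m) (act B X Y) := by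
  rw [map_mul, Module.End.mul_apply]
  congr 1
  simp only [act, ExteriorAlgebra.lift_ι_apply]
  rfl

lemma act_con (B : M →ₗ[F] Module.Dual F N) (B' : N →ₗ[F] Module.Dual F M)
    (hB : ∀ m n, B m n = B' n m) (ω : ExteriorAlgebra F N)
    (hω : ∀ n, ExteriorAlgebra.ι F n * ω = 0) (n : N) (X : ExteriorAlgebra F M) :
    act B (con (B' n) X) ω = ExteriorAlgebra.ι F n * act B X ω := by
  induction X using CliffordAlgebra.left_induction with
  | algebraMap r =>
    erw [con_alg]
    rw [map_zero, AlgHom.commutes]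
    simp [hω]
  | add x y hx hy => simp only [map_add, LinearMap.add_apply, mul_add, hx, hy]
  | ι_mul x w hx =>
    change act B (con (B' n) (ExteriorAlgebra.ι F w * x)) ω =
      ExteriorAlgebra.ι F n * act B (ExteriorAlgebra.ι F w * x) ω
    rw [con_ι_mul, map_sub, LinearMap.sub_apply, act_ι_mul, act_ι_mul, hx, con_ι_mul, map_smul, hB]
    simp

lemma act_dec (B : M →ₗ[F] Module.Dual F N) {n : ℕ} {ω : ExteriorAlgebra F N}
    (hω : Dec (⊤ : Submodule F N) n ω) {j : ℕ} (hj : j < n) {X : ExteriorAlgebra F M}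
    (hX : Dec (⊤ : Submodule F M) j X) : Dec (⊤ : Submodule F N) (n - j) (act B X ω) := by
  induction j generalizing X with
  | zero => rw [dec_zero] at hX; rw [hX, map_one]; exact hω
  | succ j ih =>
    obtain ⟨x, X', h', rfl⟩ := dec_succ.1 hX
    have := ih (by omega) h'
    obtain ⟨d, hd⟩ : ∃ d, n = j + d + 2 := ⟨n - j - 2, by omega⟩
    rw [act_ι_mul]
    rw [show n - (j + 1) = d + 1 by omega]
    rw [show n - j = d + 2 by omega] at this
    exact dec_con _ this

lemma top_mul [FiniteDimensional F M] {n : ℕ} (hn : finrank F M = n) {X : ExteriorAlgebra F M}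
    (h : memPow ⊤ n X) (v : M) : ExteriorAlgebra.ι F v * X = 0 := by
  rw [memPow_top, ← ExteriorAlgebra.ιMulti_span_fixedDegree] at h
  induction h using Submodule.span_induction with
  | mem x hx =>
    obtain ⟨w, rfl⟩ := hx
    have : ExteriorAlgebra.ιMulti F (n + 1) (Fin.cons v w) = 0 := by
      apply AlternatingMap.map_linearDependent
      intro hli
      have := hli.fintype_card_le_finrank
      simp at this
      omega
    rw [ExteriorAlgebra.ιMulti_succ_apply] at this
    simpa [Matrix.vecTail, Function.comp_def] using this
  | zero => simp
  | add x y _ _ hx hy => rw [mul_add, hx, hy, add_zero]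
  | smul c x _ hx => rw [mul_smul_comm, hx, smul_zero]

lemma dec_list (l : List M) : Dec (⊤ : Submodule F M) l.length (l.map (ExteriorAlgebra.ι F)).prod := by
  induction l with
  | nil => exact dec_zero.2 (by simp)
  | cons a l ih => exact dec_succ.2 ⟨a, _, ih, by simp⟩

lemma con_list (φ : Module.Dual F M) (l : List M) (h : ∀ x ∈ l, φ x = 0) :
    con φ (l.map (ExteriorAlgebra.ι F)).prod = 0 := by
  induction l with
  | nil => simpa using con_one φ
  | cons a l ih =>
    rw [List.map_cons, List.prod_cons, con_ι_mul, ih (fun x hx => h x (by simp [hx])),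
      h a (by simp)]
    simp

lemma act_list {I : Type*} (b : I → N) (b' : I → M) (B : M →ₗ[F] Module.Dual F N)
    (h1 : ∀ i, B (b' i) (b i) = 1) (h2 : ∀ i j, i ≠ j → B (b' i) (b j) = 0)
    (l : List I) (hl : l.Nodup) :
    act B ((l.reverse.map b').map (ExteriorAlgebra.ι F)).prod
      ((l.map b).map (ExteriorAlgebra.ι F)).prod = 1 := by
  induction l with
  | nil => simp
  | cons a l ih =>
    rw [List.nodup_cons] at hl
    rw [List.reverse_cons, List.map_append, List.map_append, List.prod_append, map_mul,
      Module.End.mul_apply]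
    have : act B ((([a].map b').map (ExteriorAlgebra.ι F)).prod)
        (((a :: l).map b).map (ExteriorAlgebra.ι F)).prod
        = ((l.map b).map (ExteriorAlgebra.ι F)).prod := by
      have e := act_ι_mul B (b' a) 1 (((a :: l).map b).map (ExteriorAlgebra.ι F)).prod
      simp only [List.map_cons, List.map_nil, List.prod_cons, List.prod_nil] at e ⊢
      rw [e, map_one, Module.End.one_apply, con_ι_mul, con_list, h1]
      · simp
      · intro x hx
        obtain ⟨j, hj, rfl⟩ := List.mem_map.1 hx
        exact h2 _ _ (fun h => hl.1 (h ▸ hj))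
    rw [this]
    exact ih hl.2

lemma top_eq [FiniteDimensional F M] {n : ℕ} (b : Basis (Fin n) F M) {X : ExteriorAlgebra F M}
    (h : memPow ⊤ n X) : ∃ c : F, X = c • ExteriorAlgebra.ιMulti F n b := by
  rw [memPow_top, ← ExteriorAlgebra.ιMulti_span_fixedDegree] at h
  induction h using Submodule.span_induction with
  | mem x hx =>
    obtain ⟨w, rfl⟩ := hx
    refine ⟨b.det w, ?_⟩
    have : ExteriorAlgebra.ιMulti F n =
      (LinearMap.toSpanSingleton F _ (ExteriorAlgebra.ιMulti F n b)).compAlternatingMap b.det := by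
      apply Basis.ext_alternating b
      intro v hv
      have hbij : Function.Bijective v := Finite.injective_iff_bijective.1 hv
      let σ := Equiv.ofBijective v hbij
      have e : (fun i => b (v i)) = b ∘ σ := rfl
      rw [e, AlternatingMap.map_perm, AlternatingMap.map_perm]
      simp [b.det_self]
    exact congrArg (fun f => f w) this
  | zero => exact ⟨0, by simp⟩
  | add x y _ _ hx hy =>
    obtain ⟨c, rfl⟩ := hx
    obtain ⟨d, rfl⟩ := hy
    exact ⟨c + d, by rw [add_smul]⟩
  | smul a x _ hx =>
    obtain ⟨c, rfl⟩ := hx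
    exact ⟨a * c, by rw [smul_smul]⟩

end Part3

section Part4

variable {F : Type*} [Field F] {V : Type*} [AddCommGroup V] [Module F V]

lemma evalForm_add (m : ℕ) (X Y : ExteriorAlgebra F (Module.Dual F V)) (v : Fin m → V) :
    evalForm m (X + Y) v = evalForm m X v + evalForm m Y v := by
  simp [evalForm]

lemma evalForm_sub (m : ℕ) (X Y : ExteriorAlgebra F (Module.Dual F V)) (v : Fin m → V) :
    evalForm m (X - Y) v = evalForm m X v - evalForm m Y v := by
  simp [evalForm]

lemma evalForm_smul (m : ℕ) (c : F) (X : ExteriorAlgebra F (Module.Dual F V)) (v : Fin m → V) :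
    evalForm m (c • X) v = c * evalForm m X v := by
  simp [evalForm]

lemma evalForm_zero_alg (r : F) (v : Fin 0 → V) :
    evalForm 0 (algebraMap F (ExteriorAlgebra F (Module.Dual F V)) r) v = r := by
  unfold evalForm
  rw [ExteriorAlgebra.liftAlternating_algebraMap, Pi.single_eq_same]
  refine (congrArg (fun t => r • t) (Matrix.det_isEmpty (n := Fin 0))).trans ?_
  simp

lemma evalForm_succ_alg (m : ℕ) (r : F) (v : Fin (m + 1) → V) :
    evalForm (m + 1) (algebraMap F (ExteriorAlgebra F (Module.Dual F V)) r) v = 0 := by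
  unfold evalForm
  rw [ExteriorAlgebra.liftAlternating_algebraMap, Pi.single_eq_of_ne (by omega)]
  simp

lemma evalForm_zero_mul (φ : Module.Dual F V) (Y : ExteriorAlgebra F (Module.Dual F V))
    (v : Fin 0 → V) :
    evalForm 0 (ExteriorAlgebra.ι F φ * Y) v = 0 := by
  unfold evalForm
  rw [ExteriorAlgebra.liftAlternating_ι_mul]
  convert LinearMap.zero_apply Y
  convert map_zero (ExteriorAlgebra.liftAlternating (R := F) (M := Module.Dual F V) (N := F)) with i
  simp [Pi.single_eq_of_ne]

lemma evalForm_succ_mul (m : ℕ) (φ : Module.Dual F V) (Y : ExteriorAlgebra F (Module.Dual F V))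
    (v : Fin (m + 1) → V) :
    evalForm (m + 1) (ExteriorAlgebra.ι F φ * Y) v =
      ∑ j : Fin (m + 1), (-1) ^ (j : ℕ) * φ (v j) * evalForm m Y (fun i => v (j.succAbove i)) := by
  let A : ∀ m : ℕ, (Fin m → V) → (Module.Dual F V) [⋀^Fin m]→ₗ[F] F := fun m v =>
    (Matrix.detRowAlternating : (Fin m → F) [⋀^Fin m]→ₗ[F] F).compLinearMap
        (LinearMap.pi fun j => Module.Dual.eval F V (v j))
  change ExteriorAlgebra.liftAlternating (Pi.single (m + 1) (A (m + 1) v)) _ = 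
    ∑ j : Fin (m + 1), (-1) ^ (j : ℕ) * φ (v j) *
      ExteriorAlgebra.liftAlternating (Pi.single m (A m (fun i => v (j.succAbove i)))) Y
  rw [ExteriorAlgebra.liftAlternating_ι_mul]
  have key : (fun i => ((Pi.single (m + 1) (A (m + 1) v) :
      ∀ i, (Module.Dual F V) [⋀^Fin i]→ₗ[F] F) i.succ).curryLeft φ)
      = ∑ j : Fin (m + 1), ((-1) ^ (j : ℕ) * φ (v j)) •
        (Pi.single m (A m (fun i => v (j.succAbove i))) :
          ∀ i, (Module.Dual F V) [⋀^Fin i]→ₗ[F] F) := by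
    funext i
    rw [Finset.sum_apply]
    by_cases hi : i = m
    · subst hi
      ext w
      have hsum : ∀ f : Fin (i + 1) → (Module.Dual F V) [⋀^Fin i]→ₗ[F] F,
          (∑ j, f j) w = ∑ j, f j w := fun f => by
        let ev : ((Module.Dual F V) [⋀^Fin i]→ₗ[F] F) →+ F :=
          { toFun := fun g => g w, map_zero' := rfl, map_add' := fun _ _ => rfl }
        exact map_sum ev f Finset.univ
      rw [AlternatingMap.curryLeft_apply_apply, hsum]
      simp only [Pi.smul_apply, Nat.succ_eq_add_one, Pi.single_eq_same, AlternatingMap.smul_apply]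
      refine (Matrix.det_succ_row_zero _).trans ?_
      rfl
    · have h1 : ¬ (i + 1 = m + 1) := by omega
      simp [Pi.single_eq_of_ne, hi]
  rw [key, map_sum, LinearMap.sum_apply]
  refine Finset.sum_congr rfl fun j _ => ?_
  rw [map_smul]; rfl

lemma evalForm_cons (m : ℕ) (Y : ExteriorAlgebra F (Module.Dual F V)) (x : V) (v : Fin m → V) :
    evalForm (m + 1) Y (Fin.cons x v) = evalForm m (con (Module.Dual.eval F V x) Y) v := by
  induction Y using CliffordAlgebra.left_induction generalizing m with
  | algebraMap r =>
    erw [con_alg]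
    refine (evalForm_succ_alg _ _ _).trans ?_
    simp [evalForm]
  | add X Y hX hY => rw [map_add, evalForm_add, evalForm_add, hX, hY]
  | ι_mul Y φ ih =>
    change evalForm (m + 1) (ExteriorAlgebra.ι F φ * Y) (Fin.cons x v)
      = evalForm m (con (Module.Dual.eval F V x) (ExteriorAlgebra.ι F φ * Y)) v
    rw [con_ι_mul, evalForm_sub, evalForm_smul, evalForm_succ_mul, Fin.sum_univ_succ]
    rcases m with _ | m
    · rw [evalForm_zero_mul]; simp
    · rw [evalForm_succ_mul, sub_eq_add_neg, ← Finset.sum_neg_distrib]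
      congr 1
      · simp
      · refine Finset.sum_congr rfl fun j _ => ?_
        rw [← ih]
        have : (fun i => (Fin.cons x v : Fin (m + 1 + 1) → V) (j.succ.succAbove i))
          = Fin.cons x (fun i => v (j.succAbove i)) := by
          funext i
          refine Fin.cases ?_ (fun i => ?_) i
          · simp
          · simp
        rw [this]
        simp [pow_succ]

variable [FiniteDimensional F V]

lemma dual_eval_surj (ψ : Module.Dual F (Module.Dual F V)) :
    ∃ v, ψ = Module.Dual.eval F V v :=
  ⟨(Module.evalEquiv F V).symm ψ, by
    have := (Module.evalEquiv F V).apply_symm_apply ψ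
    exact this.symm⟩

lemma evalForm_inj (m : ℕ) {Y : ExteriorAlgebra F (Module.Dual F V)} (hY : memPow ⊤ m Y)
    (h : ∀ v, evalForm m Y v = 0) : Y = 0 := by
  induction m generalizing Y with
  | zero =>
    obtain ⟨r, rfl⟩ := memPow_zero_iff hY
    have := h Fin.elim0
    rw [evalForm_zero_alg] at this
    rw [this, map_zero]
  | succ m ih =>
    apply eq_zero_of_con hY
    intro ψ
    obtain ⟨v, rfl⟩ := dual_eval_surj ψ
    apply ih (con_memPow _ hY).1
    intro w
    rw [← evalForm_cons]
    exact h _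

/-- sign of reversal -/
def rsgn (F : Type*) [Field F] : ℕ → F
  | 0 => 1
  | (k + 1) => (-1) ^ k * rsgn F k

lemma rsgn_ne (k : ℕ) : rsgn F k ≠ 0 := by
  induction k with
  | zero => simp [rsgn]
  | succ k ih => simp [rsgn, ih]

lemma evalForm_append (k m N : ℕ) (h : N = k + m) (x : Fin k → V) (v : Fin m → V)
    (Y : ExteriorAlgebra F (Module.Dual F V)) :
    evalForm N Y (fun i => Fin.append x v (Fin.cast h i)) =
      rsgn F k * evalForm m (act (Module.Dual.eval F V) (ExteriorAlgebra.ιMulti F k x) Y) v := by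
  induction k generalizing N Y with
  | zero =>
    obtain rfl : N = m := by omega
    simp only [rsgn, one_mul, ExteriorAlgebra.ιMulti_zero_apply, map_one, Module.End.one_apply]
    congr 1
    funext i
    rw [Fin.append_left_nil x v rfl]
    simp [Fin.cast]
  | succ k ih =>
    obtain ⟨N, rfl⟩ : ∃ N', N = N' + 1 := ⟨k + m, by omega⟩
    have e : (fun i => Fin.append x v (Fin.cast h i)) =
        Fin.cons (x 0) (fun i : Fin N =>
          Fin.append (fun i => x i.succ) v (Fin.cast (by omega) i)) := by
      funext i
      refine Fin.cases ?_ (fun i => ?_) i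
      · have : Fin.cast h 0 = Fin.castAdd m (0 : Fin (k + 1)) := by ext; simp
        rw [this, Fin.append_left]; simp
      · simp only [Fin.cons_succ]
        have hN : N = k + m := by omega
        obtain ⟨j, rfl⟩ : ∃ j : Fin (k + m), i = Fin.cast hN.symm j := ⟨Fin.cast hN i, by simp⟩
        refine Fin.addCases (fun j => ?_) (fun j => ?_) j
        · have : Fin.cast h (Fin.cast hN.symm (Fin.castAdd m j)).succ
              = Fin.castAdd m j.succ := by ext; simp
          rw [this, Fin.append_left]; simp
        · have : Fin.cast h (Fin.cast hN.symm (Fin.natAdd k j)).succ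
              = Fin.natAdd (k + 1) j := by ext; simp; omega
          rw [this, Fin.append_right]; simp
    rw [e, evalForm_cons, ih]
    have h2 : memPow (⊤ : Submodule F V) k (ExteriorAlgebra.ιMulti F k (fun i => x i.succ)) :=
      dec_memPow ⟨_, by simp, rfl⟩
    have h3 := mul_ι_comm h2 (x 0)
    have h4 : ExteriorAlgebra.ιMulti F (k + 1) x = (-1 : F) ^ k •
        (ExteriorAlgebra.ιMulti F k (fun i => x i.succ) * ExteriorAlgebra.ι F (x 0)) := by
      rw [h3, smul_smul, ← mul_pow, ExteriorAlgebra.ιMulti_succ_apply]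
      simp [Matrix.vecTail, Function.comp_def]
    have h5 := act_ι_mul (Module.Dual.eval F V) (x 0) 1 Y
    rw [mul_one, map_one, Module.End.one_apply] at h5
    rw [h4, map_smul, map_mul, LinearMap.smul_apply, Module.End.mul_apply, h5, evalForm_smul, rsgn]
    rw [← mul_assoc]
    congr 1
    rw [mul_right_comm, ← mul_pow]
    simp

end Part4

section Part5

variable {F : Type*} [Field F] {V : Type*} [AddCommGroup V] [Module F V]
  [FiniteDimensional F V]

lemma dual_vol (n : ℕ) (hn : finrank F V = n + 1) (vol : ExteriorAlgebra F (Module.Dual F V))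
    (hv : memPow ⊤ (n + 1) vol) (hv0 : vol ≠ 0) :
    ∃ (vol' : ExteriorAlgebra F V) (c : F), c ≠ 0 ∧
      Dec (⊤ : Submodule F (Module.Dual F V)) (n + 1) vol ∧
      Dec (⊤ : Submodule F V) (n + 1) vol' ∧
      act (LinearMap.id : Module.Dual F V →ₗ[F] Module.Dual F V) vol vol' = algebraMap F _ c := by
  let b : Basis (Fin (n + 1)) F V := Module.finBasisOfFinrankEq F V hn
  let l : List (Fin (n + 1)) := (List.finRange (n + 1)).reverse
  have hl : l.Nodup := List.nodup_reverse.2 (List.nodup_finRange _)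
  let vol' : ExteriorAlgebra F V := ((l.map b).map (ExteriorAlgebra.ι F)).prod
  obtain ⟨c, hc⟩ := top_eq b.dualBasis hv
  have hc0 : c ≠ 0 := by rintro rfl; exact hv0 (by rw [hc, zero_smul])
  have hone : act (LinearMap.id : Module.Dual F V →ₗ[F] Module.Dual F V) vol vol'
      = algebraMap F _ c := by
    have := act_list (F := F) b b.dualBasis (LinearMap.id) (fun i => by simp)
      (fun i j hij => by simp [hij.symm]) l hl
    have e : ((l.reverse.map b.dualBasis).map (ExteriorAlgebra.ι F)).prod
        = ExteriorAlgebra.ιMulti F (n + 1) b.dualBasis := by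
      rw [ExteriorAlgebra.ιMulti_apply]
      simp only [l, List.reverse_reverse, List.map_map]
      rw [List.ofFn_eq_map]; rfl
    rw [e] at this
    rw [hc, map_smul, LinearMap.smul_apply, this, Algebra.algebraMap_eq_smul_one]
  have hvol'dec : Dec (⊤ : Submodule F V) (n + 1) vol' := by
    have := dec_list (F := F) (l.map b)
    have e : (l.map b).length = n + 1 := by simp [l]
    rw [e] at this
    exact this
  have hvoldec : Dec (⊤ : Submodule F (Module.Dual F V)) (n + 1) vol := by
    rw [hc]
    exact dec_smul _ ⟨_, by simp, rfl⟩
  exact ⟨vol', c, hc0, hvoldec, hvol'dec, hone⟩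

/-- the action as a linear map -/
noncomputable def actL {M N : Type*} [AddCommGroup M] [Module F M] [AddCommGroup N] [Module F N]
    (B : M →ₗ[F] Module.Dual F N) (s : F) (ω : ExteriorAlgebra F N) :
    ExteriorAlgebra F M →ₗ[F] ExteriorAlgebra F N where
  toFun X := s • act B X ω
  map_add' X Y := by rw [map_add, LinearMap.add_apply, smul_add]
  map_smul' c X := by rw [map_smul, LinearMap.smul_apply, smul_comm]; rfl

lemma actL_apply {M N : Type*} [AddCommGroup M] [Module F M] [AddCommGroup N] [Module F N]
    (B : M →ₗ[F] Module.Dual F N) (s : F) (ω : ExteriorAlgebra F N) (X : ExteriorAlgebra F M) :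
    actL B s ω X = s • act B X ω := rfl

lemma dual_data_aux {M N : Type*} [AddCommGroup M] [Module F M] [AddCommGroup N] [Module F N]
    (B : M →ₗ[F] Module.Dual F N) (B' : N →ₗ[F] Module.Dual F M)
    (hB : ∀ m n, B m n = B' n m) (n : ℕ) (vol : ExteriorAlgebra F N)
    (vol' : ExteriorAlgebra F M) (c s : F) (hc0 : c ≠ 0) (hs : s ≠ 0)
    (hvoldec : Dec (⊤ : Submodule F N) (n + 1) vol)
    (hvol'dec : Dec (⊤ : Submodule F M) (n + 1) vol')
    (hone : act B' vol vol' = algebraMap F _ c)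
    (hk' : ∀ v : M, ExteriorAlgebra.ι F v * vol' = 0)
    (hk : ∀ φ : N, ExteriorAlgebra.ι F φ * vol = 0) :
    ∃ (G : ExteriorAlgebra F M →ₗ[F] ExteriorAlgebra F N)
      (H : ExteriorAlgebra F N →ₗ[F] ExteriorAlgebra F M),
      (∀ X, G X = s • act B X vol) ∧
      (∀ v X, G (ExteriorAlgebra.ι F v * X) = con (B v) (G X)) ∧
      (∀ φ X, G (con (B' φ) X) = ExteriorAlgebra.ι F φ * G X) ∧
      (∀ φ Y, H (ExteriorAlgebra.ι F φ * Y) = con (B' φ) (H Y)) ∧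
      (∀ v Y, H (con (B v) Y) = ExteriorAlgebra.ι F v * H Y) ∧
      (∀ X, H (G X) = X) ∧
      (∀ j < n + 1, ∀ X, Dec (⊤ : Submodule F M) j X →
        Dec (⊤ : Submodule F N) (n + 1 - j) (G X)) ∧
      (∀ j < n + 1, ∀ Y, Dec (⊤ : Submodule F N) j Y →
        Dec (⊤ : Submodule F M) (n + 1 - j) (H Y)) := by
  have a1 := act_con B B' hB vol hk
  have a2 := act_con B' B (fun n m => (hB m n).symm) vol' hk'
  have hinv : ∀ X, act B' (act B X vol) vol' = c • X := by
    intro X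
    induction X using CliffordAlgebra.left_induction with
    | algebraMap r =>
      rw [AlgHom.commutes]
      simp only [Module.algebraMap_end_apply, map_smul, LinearMap.smul_apply, hone]
      rw [Algebra.algebraMap_eq_smul_one, Algebra.algebraMap_eq_smul_one, smul_smul, smul_smul,
        mul_comm]
    | add x y hx hy => simp only [map_add, LinearMap.add_apply, hx, hy, smul_add]
    | ι_mul x v hx =>
      change act B' (act B (ExteriorAlgebra.ι F v * x) vol) vol'
        = c • (ExteriorAlgebra.ι F v * x)
      rw [act_ι_mul, a2, hx, mul_smul_comm]
  refine ⟨actL B s vol, actL B' (s * c)⁻¹ vol', fun X => rfl, ?_, ?_, ?_, ?_, ?_, ?_, ?_⟩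
  · intro v X
    rw [actL_apply, actL_apply, act_ι_mul, map_smul]
  · intro φ X
    rw [actL_apply, actL_apply, a1, mul_smul_comm]
  · intro φ Y
    rw [actL_apply, actL_apply, act_ι_mul, map_smul]
  · intro v Y
    rw [actL_apply, actL_apply, a2, mul_smul_comm]
  · intro X
    rw [actL_apply, actL_apply, map_smul, LinearMap.smul_apply, hinv, smul_smul, smul_smul,
      mul_assoc, inv_mul_cancel₀, one_smul]
    exact mul_ne_zero hs hc0
  · intro j hj X hX
    have := act_dec B hvoldec hj hX
    rw [show n + 1 - j = n - j + 1 by omega] at this ⊢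
    exact dec_smul _ this
  · intro j hj X hX
    have := act_dec B' hvol'dec hj hX
    rw [show n + 1 - j = n - j + 1 by omega] at this ⊢
    exact dec_smul _ this

lemma dual_data (n : ℕ) (hn : finrank F V = n + 1) (vol : ExteriorAlgebra F (Module.Dual F V))
    (hv : memPow ⊤ (n + 1) vol) (hv0 : vol ≠ 0) (s : F) (hs : s ≠ 0) :
    ∃ (G : ExteriorAlgebra F V →ₗ[F] ExteriorAlgebra F (Module.Dual F V))
      (H : ExteriorAlgebra F (Module.Dual F V) →ₗ[F] ExteriorAlgebra F V),
      (∀ X, G X = s • act (Module.Dual.eval F V) X vol) ∧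
      (∀ v X, G (ExteriorAlgebra.ι F v * X) = con (Module.Dual.eval F V v) (G X)) ∧
      (∀ φ X, G (con φ X) = ExteriorAlgebra.ι F φ * G X) ∧
      (∀ φ Y, H (ExteriorAlgebra.ι F φ * Y) = con φ (H Y)) ∧
      (∀ v Y, H (con (Module.Dual.eval F V v) Y) = ExteriorAlgebra.ι F v * H Y) ∧
      (∀ X, H (G X) = X) ∧
      (∀ j < n + 1, ∀ X, Dec (⊤ : Submodule F V) j X →
        Dec (⊤ : Submodule F (Module.Dual F V)) (n + 1 - j) (G X)) ∧
      (∀ j < n + 1, ∀ Y, Dec (⊤ : Submodule F (Module.Dual F V)) j Y →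
        Dec (⊤ : Submodule F V) (n + 1 - j) (H Y)) := by
  obtain ⟨vol', c, hc0, hvoldec, hvol'dec, hone⟩ := dual_vol n hn vol hv hv0
  have hk' : ∀ v : V, ExteriorAlgebra.ι F v * vol' = 0 := top_mul hn (dec_memPow hvol'dec)
  have hk : ∀ φ : Module.Dual F V, ExteriorAlgebra.ι F φ * vol = 0 :=
    top_mul (by rw [Subspace.dual_finrank_eq, hn]) hv
  exact dual_data_aux (Module.Dual.eval F V) LinearMap.id (fun _ _ => rfl) n vol vol' c s hc0 hs
    hvoldec hvol'dec hone hk' hk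

lemma rkInv_eq_iff {M : Type*} [AddCommGroup M] [Module F M] [FiniteDimensional F M] {n : ℕ}
    (hn : finrank F M = n) (k : ℕ) (X : ExteriorAlgebra F M) :
    rkInv k X = n ↔ supp k X = ⊤ := by
  unfold rkInv
  constructor
  · intro h; exact Submodule.eq_top_of_finrank_eq (h.trans hn.symm)
  · intro h; rw [h, finrank_top, hn]

end Part5

/-- Let `V` be an `n`-dimensional vector space over a field `F` of
characteristic `0`, `0 ≠ vol ∈ Λⁿ V*`, `1 ≤ k ≤ n-1`, and let `δ : Λ^k V → Λ^{n-k} V*`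
be the dual isomorphism `δ(X) = X ⌟ vol`.  Then:
(i)  if `X ∈ Λ^k V` satisfies `r(X) = 0`, then `ρ(δ(X)) < n`;
(ii) if `X ∈ Λ^k V` satisfies `ρ(X) = n` and `r(X) > 0`, then `ρ(δ(X)) = n`,
     `m(δ(X)) = r(X)` and `r(δ(X)) = m(X)`. -/
theorem stmt6 {F : Type*} [Field F] [CharZero F] {V : Type*} [AddCommGroup V] [Module F V]
    [FiniteDimensional F V] (n k : ℕ) (hn : finrank F V = n)
    (hk1 : 1 ≤ k) (hk2 : k ≤ n - 1)
    (vol : ⋀[F]^n (Module.Dual F V)) (hvol : vol ≠ 0)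
    (δ : ⋀[F]^k V →ₗ[F] ⋀[F]^(n - k) (Module.Dual F V))
    (hδ : ∀ (x : Fin k → V) (v : Fin (n - k) → V),
      evalForm (n - k)
        (δ ⟨ExteriorAlgebra.ιMulti F k x, ExteriorAlgebra.ιMulti_range F k ⟨x, rfl⟩⟩ :
          ExteriorAlgebra F (Module.Dual F V)) v =
      evalForm n (vol : ExteriorAlgebra F (Module.Dual F V))
        (fun i : Fin n => Fin.append x v (Fin.cast (by omega) i))) :
    (∀ X : ⋀[F]^k V,
      rInv (⊤ : Submodule F V) k (X : ExteriorAlgebra F V) = 0 →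
        rkInv (n - k) (δ X : ExteriorAlgebra F (Module.Dual F V)) < n) ∧
    (∀ X : ⋀[F]^k V,
      rkInv k (X : ExteriorAlgebra F V) = n →
      0 < rInv (⊤ : Submodule F V) k (X : ExteriorAlgebra F V) →
        rkInv (n - k) (δ X : ExteriorAlgebra F (Module.Dual F V)) = n ∧
        mInv (⊤ : Submodule F (Module.Dual F V)) (n - k)
            (δ X : ExteriorAlgebra F (Module.Dual F V)) =
          rInv (⊤ : Submodule F V) k (X : ExteriorAlgebra F V) ∧
        rInv (⊤ : Submodule F (Module.Dual F V)) (n - k)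
            (δ X : ExteriorAlgebra F (Module.Dual F V)) =
          mInv (⊤ : Submodule F V) k (X : ExteriorAlgebra F V)) := by
  obtain ⟨n, rfl⟩ : ∃ n', n = n' + 1 := ⟨n - 1, by omega⟩
  have hvm : memPow ⊤ (n + 1) (vol : ExteriorAlgebra F (Module.Dual F V)) := memPow_top.2 vol.2
  have hv0 : (vol : ExteriorAlgebra F (Module.Dual F V)) ≠ 0 := by simpa using hvol
  obtain ⟨G, H, hG, G1, G2, H1, H2, HG, GD, HD⟩ :=
    dual_data n hn _ hvm hv0 (rsgn F k) (rsgn_ne k)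
  have hn' : finrank F (Module.Dual F V) = n + 1 := by rw [Subspace.dual_finrank_eq, hn]
  -- `δ` is the restriction of `G`
  have hδG : ∀ X : ⋀[F]^k V, (δ X : ExteriorAlgebra F (Module.Dual F V)) = G X := by
    have : (Submodule.subtype _) ∘ₗ δ = G ∘ₗ (Submodule.subtype (⋀[F]^k V)) := by
      apply exteriorPower.linearMap_ext
      ext x
      have hd : Dec (⊤ : Submodule F V) k (ExteriorAlgebra.ιMulti F k x) := ⟨x, by simp, rfl⟩
      change (δ ⟨ExteriorAlgebra.ιMulti F k x, ExteriorAlgebra.ιMulti_range F k ⟨x, rfl⟩⟩ :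
          ExteriorAlgebra F (Module.Dual F V)) = G (ExteriorAlgebra.ιMulti F k x)
      rw [← sub_eq_zero]
      apply evalForm_inj (n + 1 - k)
      · refine memPow_sub (memPow_top.2 (Subtype.prop _)) ?_
        exact dec_memPow (GD k (by omega) _ hd)
      · intro v
        rw [evalForm_sub, hδ, sub_eq_zero, evalForm_append, hG, evalForm_smul]
    intro X
    exact congrArg (fun f => f X) this
  have hXm : ∀ X : ⋀[F]^k V, memPow ⊤ k (X : ExteriorAlgebra F V) := fun X => memPow_top.2 X.2
  have hYm : ∀ X : ⋀[F]^k V, memPow ⊤ (n + 1 - k) (G X) := fun X => by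
    rw [← hδG]; exact memPow_top.2 (Subtype.prop _)
  have evinj : ∀ v : V, v ≠ 0 → Module.Dual.eval F V v ≠ 0 := by
    intro v hv h
    exact hv ((Module.evalEquiv F V).injective (by rw [map_zero]; exact h))
  constructor
  · intro X hr
    rw [hδG]
    obtain ⟨k, rfl⟩ : ∃ k', k = k' + 1 := ⟨k - 1, by omega⟩
    have hne : supp (n + 1 - (k + 1)) (G X) ≠ ⊤ := by
      rw [supp_ne_top_iff (hYm X)]
      by_cases hX : (X : ExteriorAlgebra F V) = 0
      · have : Nontrivial V := Module.nontrivial_of_finrank_pos (R := F) (by omega)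
        obtain ⟨v, hv⟩ := exists_ne (0 : V)
        exact ⟨Module.Dual.eval F V v, evinj v hv, by rw [hX, map_zero, map_zero]⟩
      · obtain ⟨v, hv, hvX⟩ := rInv_zero (hXm X) hX hr
        exact ⟨Module.Dual.eval F V v, evinj v hv, by rw [← G1, hvX, map_zero]⟩
    exact (Submodule.finrank_lt hne).trans_eq hn'
  · intro X hρ hr
    rw [hδG, rkInv_eq_iff hn']
    rw [rkInv_eq_iff hn] at hρ
    have hS : supp (n + 1 - k) (G X) = ⊤ := by
      by_contra hne
      obtain ⟨ψ, hψ, hc⟩ := (supp_ne_top_iff (hYm X)).1 hne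
      obtain ⟨v, rfl⟩ := dual_eval_surj ψ
      have hv : v ≠ 0 := by rintro rfl; simp at hψ
      have : ExteriorAlgebra.ι F v * (X : ExteriorAlgebra F V) = 0 := by
        rw [← HG (ExteriorAlgebra.ι F v * (X : ExteriorAlgebra F V)), G1, hc, map_zero]
      rw [rInv_zero_of (hXm X) hρ hv this] at hr
      exact lt_irrefl _ hr
    have hk2' : 2 ≤ k := by
      by_contra hlt
      obtain rfl : k = 1 := by omega
      have := supp_one_finrank (hXm X)
      rw [hρ, finrank_top] at this
      omega
    have hnk : 2 ≤ n + 1 - k := by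
      by_contra hlt
      have h1 : n + 1 - k = 1 := by omega
      have h2 := hYm X
      rw [h1] at h2 hS
      have := supp_one_finrank h2
      rw [hS, finrank_top] at this
      omega
    obtain ⟨a, rfl⟩ : ∃ a, k = a + 2 := ⟨k - 2, by omega⟩
    obtain ⟨c, hc⟩ : ∃ c, n + 1 - (a + 2) = c + 2 := ⟨n + 1 - (a + 2) - 2, by omega⟩
    have hY := hYm X
    have GD' : ∀ Z, Dec (⊤ : Submodule F V) (a + 2) Z →
        Dec (⊤ : Submodule F (Module.Dual F V)) (c + 2) (G Z) := fun Z hZ => by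
      have := GD (a + 2) (by omega) Z hZ
      rwa [hc] at this
    have HD' : ∀ Z, Dec (⊤ : Submodule F (Module.Dual F V)) (c + 2) Z →
        Dec (⊤ : Submodule F V) (a + 2) (H Z) := fun Z hZ => by
      have := HD (c + 2) (by omega) Z hZ
      rwa [show n + 1 - (c + 2) = a + 2 by omega] at this
    rw [hc] at hS hY ⊢
    refine ⟨hS, ?_, ?_⟩
    · rw [mInv_eq hY hS, rInv_eq (hXm X) hρ]
      congr 1
      ext l
      constructor
      · rintro ⟨ψ, φ, h1, hl⟩
        obtain ⟨v, rfl⟩ := dual_eval_surj ψ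
        refine ⟨φ, v, h1, ?_⟩
        have := lenLE_map (b := c + 2) (LinearMap.mulLeft F (ExteriorAlgebra.ι F φ))
          (fun Z hZ => dec_succ.2 ⟨φ, Z, hZ, rfl⟩) hl
        have := lenLE_map H HD' this
        rwa [LinearMap.mulLeft_apply, H1, H2, HG] at this
      · rintro ⟨φ, v, h1, hl⟩
        refine ⟨Module.Dual.eval F V v, φ, h1, ?_⟩
        have := lenLE_map G GD' hl
        have := lenLE_map (con (Module.Dual.eval F V v)) (fun Z hZ => dec_con _ hZ) this
        rw [G2, G1, con_ι_mul, con_con] at this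
        simpa [h1] using this
    · rw [rInv_eq hY hS, mInv_eq (hXm X) hρ]
      congr 1
      ext l
      constructor
      · rintro ⟨ψ, φ, h1, hl⟩
        obtain ⟨v, rfl⟩ := dual_eval_surj ψ
        refine ⟨φ, v, h1, ?_⟩
        have := lenLE_map H HD' hl
        rw [H2, H1, HG] at this
        have := lenLE_map (con φ) (fun Z hZ => dec_con _ hZ) this
        have h1' : φ v = 1 := h1
        rw [con_ι_mul, con_con] at this
        simpa [h1'] using this
      · rintro ⟨φ, v, h1, hl⟩
        refine ⟨Module.Dual.eval F V v, φ, h1, ?_⟩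
        have := lenLE_map (b := a + 2) (LinearMap.mulLeft F (ExteriorAlgebra.ι F v))
          (fun Z hZ => dec_succ.2 ⟨v, Z, hZ, rfl⟩) hl
        have := lenLE_map G GD' this
        rwa [LinearMap.mulLeft_apply, G1, G2] at this
end

section
/- Let V be a seven-dimensional real vector space with a basis of V* denoted e¹,…,e⁷, and write e^{ijkl} := e^i∧e^j∧e^k∧e^l. Let Ψ₊ := e^{1234}+e^{1256}+e^{3456}−e^{2467}+e^{2357}+e^{1457}+e^{1367} and Ψ₋ := e^{1234}−e^{1256}−e^{3456}−e^{2467}+e^{2357}+e^{1457}+e^{1367} in Λ⁴V*. Then (ρ(Ψ₊), l(Ψ₊), m(Ψ₊), r(Ψ₊)) = (7,5,3,3) and (ρ(Ψ₋), l(Ψ₋), m(Ψ₋), r(Ψ₋)) = (7,4,2,2). Moreover, if W is a seven-dimensional complex vector space with dual basis E¹,…,E⁷ and Ψ_ℂ := E^{1234}+E^{1256}+E^{3456}−E^{2467}+E^{2357}+E^{1457}+E^{1367} ∈ Λ⁴W*, then (ρ(Ψ_ℂ), l(Ψ_ℂ), m(Ψ_ℂ), r(Ψ_ℂ)) = (7,4,2,2).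 -/
open Module

/-- The wedge product `b i ∧ b j ∧ b k ∧ b l` of four vectors. -/
noncomputable def wedge4 {F : Type*} [Field F] {M : Type*} [AddCommGroup M] [Module F M]
    (b : Fin 7 → M) (i j k l : Fin 7) : ExteriorAlgebra F M :=
  ExteriorAlgebra.ι F (b i) * ExteriorAlgebra.ι F (b j) *
    ExteriorAlgebra.ι F (b k) * ExteriorAlgebra.ι F (b l)

/-- The four-form `Ψ₊ = e^{1234}+e^{1256}+e^{3456}-e^{2467}+e^{2357}+e^{1457}+e^{1367}`
(the Hodge dual of a `G₂`-structure), written with `0`-based indices. -/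
noncomputable def PsiPlus {F : Type*} [Field F] {M : Type*} [AddCommGroup M] [Module F M]
    (e : Fin 7 → M) : ExteriorAlgebra F M :=
  wedge4 e 0 1 2 3 + wedge4 e 0 1 4 5 + wedge4 e 2 3 4 5 - wedge4 e 1 3 5 6 +
    wedge4 e 1 2 4 6 + wedge4 e 0 3 4 6 + wedge4 e 0 2 5 6

/-- The four-form `Ψ₋ = e^{1234}-e^{1256}-e^{3456}-e^{2467}+e^{2357}+e^{1457}+e^{1367}`
(the Hodge dual of a `G₂*`-structure), written with `0`-based indices. -/
noncomputable def PsiMinus {F : Type*} [Field F] {M : Type*} [AddCommGroup M] [Module F M]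
    (e : Fin 7 → M) : ExteriorAlgebra F M :=
  wedge4 e 0 1 2 3 - wedge4 e 0 1 4 5 - wedge4 e 2 3 4 5 - wedge4 e 1 3 5 6 +
    wedge4 e 1 2 4 6 + wedge4 e 0 3 4 6 + wedge4 e 0 2 5 6


section Basics

set_option linter.unusedSimpArgs false

variable {F : Type*} [Field F] {M : Type*} [AddCommGroup M] [Module F M]

/-- contraction -/
noncomputable def ct (f : Dual F M) : ExteriorAlgebra F M →ₗ[F] ExteriorAlgebra F M :=
  CliffordAlgebra.contractLeft (Q := (0 : QuadraticForm F M)) f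

theorem ct_ι_mul (f : Dual F M) (a : M) (X : ExteriorAlgebra F M) :
    ct f (ExteriorAlgebra.ι F a * X) = f a • X - ExteriorAlgebra.ι F a * ct f X :=
  CliffordAlgebra.contractLeft_ι_mul (d := f) a X

theorem ct_ι (f : Dual F M) (a : M) :
    ct f (ExteriorAlgebra.ι F a) = algebraMap F _ (f a) :=
  CliffordAlgebra.contractLeft_ι _ f a

theorem ct_alg (f : Dual F M) (r : F) :
    ct f (algebraMap F (ExteriorAlgebra F M) r) = 0 :=
  CliffordAlgebra.contractLeft_algebraMap _ f r

theorem ct_comm (f g : Dual F M) (X : ExteriorAlgebra F M) :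
    ct f (ct g X) = - ct g (ct f X) :=
  CliffordAlgebra.contractLeft_comm _ _ _

theorem ι_swap (a b : M) :
    ExteriorAlgebra.ι F a * ExteriorAlgebra.ι F b
      = - (ExteriorAlgebra.ι F b * ExteriorAlgebra.ι F a) :=
  eq_neg_of_add_eq_zero_left (ExteriorAlgebra.ι_add_mul_swap a b)

theorem ι_swap_mul (a b : M) (X : ExteriorAlgebra F M) :
    ExteriorAlgebra.ι F a * (ExteriorAlgebra.ι F b * X)
      = - (ExteriorAlgebra.ι F b * (ExteriorAlgebra.ι F a * X)) := by
  rw [← mul_assoc, ι_swap, neg_mul, mul_assoc]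

theorem ι_sq_mul (a : M) (X : ExteriorAlgebra F M) :
    ExteriorAlgebra.ι F a * (ExteriorAlgebra.ι F a * X) = 0 := by
  rw [← mul_assoc, ExteriorAlgebra.ι_sq_zero, zero_mul]

theorem ct_basis_mul (e : Basis (Fin 7) F M) (i j : Fin 7) (X : ExteriorAlgebra F M) :
    ct (e.coord i) (ExteriorAlgebra.ι F (e j) * X)
      = (if j = i then X else 0) - ExteriorAlgebra.ι F (e j) * ct (e.coord i) X := by
  rw [ct_ι_mul]
  congr 1
  simp [Finsupp.single_apply]

theorem ct_basis (e : Basis (Fin 7) F M) (i j : Fin 7) :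
    ct (e.coord i) (ExteriorAlgebra.ι F (e j)) = if j = i then 1 else 0 := by
  rw [ct_ι]
  simp [Finsupp.single_apply]

/-- common family of forms -/
noncomputable def PsiS (s : F) (e : Fin 7 → M) : ExteriorAlgebra F M :=
  wedge4 e 0 1 2 3 + s • wedge4 e 0 1 4 5 + s • wedge4 e 2 3 4 5 - wedge4 e 1 3 5 6 +
    wedge4 e 1 2 4 6 + wedge4 e 0 3 4 6 + wedge4 e 0 2 5 6

theorem psiPlus_eq (e : Fin 7 → M) : PsiPlus (F := F) e = PsiS 1 e := by
  simp [PsiPlus, PsiS]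

theorem psiMinus_eq (e : Fin 7 → M) : PsiMinus (F := F) e = PsiS (-1) e := by
  simp [PsiMinus, PsiS, sub_eq_add_neg]

/-- coefficient extraction -/
noncomputable def co4 (e : Basis (Fin 7) F M) (i j k l : Fin 7) : ExteriorAlgebra F M →ₗ[F] F :=
  (ExteriorAlgebra.algebraMapInv (R := F) (M := M)).toLinearMap ∘ₗ
    ct (e.coord l) ∘ₗ ct (e.coord k) ∘ₗ ct (e.coord j) ∘ₗ ct (e.coord i)

theorem ctv (e : Basis (Fin 7) F M) (i : Fin 7) (v : M) (X : ExteriorAlgebra F M) :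
    ct (e.coord i) (ExteriorAlgebra.ι F v * X)
      = e.repr v i • X - ExteriorAlgebra.ι F v * ct (e.coord i) X := by
  rw [ct_ι_mul]; rfl

theorem ctv' (e : Basis (Fin 7) F M) (i : Fin 7) (v : M) :
    ct (e.coord i) (ExteriorAlgebra.ι F v) = algebraMap F _ (e.repr v i) := by
  rw [ct_ι]; rfl

theorem ct_1 (f : Dual F M) : ct f (1 : ExteriorAlgebra F M) = 0 :=
  CliffordAlgebra.contractLeft_one _ f

theorem ct_wedge4 (f : Dual F M) (e : Fin 7 → M) (i j k l : Fin 7) :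
    ct f (wedge4 e i j k l) =
      f (e i) • (ExteriorAlgebra.ι F (e j) * (ExteriorAlgebra.ι F (e k) * ExteriorAlgebra.ι F (e l)))
      - f (e j) • (ExteriorAlgebra.ι F (e i) * (ExteriorAlgebra.ι F (e k) * ExteriorAlgebra.ι F (e l)))
      + f (e k) • (ExteriorAlgebra.ι F (e i) * (ExteriorAlgebra.ι F (e j) * ExteriorAlgebra.ι F (e l)))
      - f (e l) • (ExteriorAlgebra.ι F (e i) * (ExteriorAlgebra.ι F (e j) * ExteriorAlgebra.ι F (e k))) := by
  simp only [wedge4, mul_assoc, ct_ι_mul, ct_ι, mul_sub, mul_smul_comm, Algebra.algebraMap_eq_smul_one, mul_one]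
  abel

theorem ct_sub (f : Dual F M) (X Y : ExteriorAlgebra F M) :
    ct f (X - Y) = ct f X - ct f Y := map_sub _ _ _
theorem ct_smul (f : Dual F M) (r : F) (X : ExteriorAlgebra F M) :
    ct f (r • X) = r • ct f X := map_smul _ _ _
theorem ai_ι_mul (v : M) (X : ExteriorAlgebra F M) :
    ExteriorAlgebra.algebraMapInv (ExteriorAlgebra.ι F v * X) = 0 := by
  rw [map_mul]
  simp [ExteriorAlgebra.algebraMapInv]

/-- coefficient extraction, degree three -/
noncomputable def co3 (e : Basis (Fin 7) F M) (i j k : Fin 7) : ExteriorAlgebra F M →ₗ[F] F :=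
  (ExteriorAlgebra.algebraMapInv (R := F) (M := M)).toLinearMap ∘ₗ
    ct (e.coord k) ∘ₗ ct (e.coord j) ∘ₗ ct (e.coord i)

theorem co4_v (e : Basis (Fin 7) F M) (i j k l : Fin 7) (v : M) (Y : ExteriorAlgebra F M) :
    co4 e i j k l (ExteriorAlgebra.ι F v * Y) =
      e.repr v i * co3 e j k l Y - e.repr v j * co3 e i k l Y + e.repr v k * co3 e i j l Y
        - e.repr v l * co3 e i j k Y := by
  simp only [co4, co3, LinearMap.comp_apply, AlgHom.toLinearMap_apply, ctv, ct_sub, ct_smul,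
    map_sub, map_smul, smul_eq_mul, ai_ι_mul]
  ring

theorem co3_gen (e : Basis (Fin 7) F M) (i j k : Fin 7) (a b c : M) :
    co3 e i j k (ExteriorAlgebra.ι F a * (ExteriorAlgebra.ι F b * ExteriorAlgebra.ι F c))
      = e.repr a i * (e.repr b j * e.repr c k - e.repr b k * e.repr c j)
       - e.repr a j * (e.repr b i * e.repr c k - e.repr b k * e.repr c i)
       + e.repr a k * (e.repr b i * e.repr c j - e.repr b j * e.repr c i) := by
  simp only [co3, LinearMap.comp_apply, AlgHom.toLinearMap_apply, ctv, ctv', ct_sub, ct_smul,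
    map_sub, map_smul, smul_eq_mul, ai_ι_mul, ct_alg, mul_zero, sub_zero,
    ExteriorAlgebra.algebraMap_leftInverse _ _, Algebra.algebraMap_eq_smul_one, mul_smul_comm,
    mul_one, map_one, map_zero, ct_1, smul_zero]
  ring

theorem co3_basis (e : Basis (Fin 7) F M) (i j k a b c : Fin 7) (h1 : i < j) (h2 : j < k)
    (h3 : a < b) (h4 : b < c) :
    co3 e i j k (ExteriorAlgebra.ι F (e a) * (ExteriorAlgebra.ι F (e b) * ExteriorAlgebra.ι F (e c)))
      = if a = i ∧ b = j ∧ c = k then 1 else 0 := by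
  rw [co3_gen]
  have d : ∀ x y z : Fin 7, e.repr (e a) x * (e.repr (e b) y * e.repr (e c) z)
      = if a = x ∧ b = y ∧ c = z then 1 else 0 := by
    intro x y z
    simp only [Basis.repr_self, Finsupp.single_apply]
    by_cases hx : a = x <;> by_cases hy : b = y <;> by_cases hz : c = z <;> simp [hx, hy, hz]
  simp only [mul_sub, d]
  rw [if_neg (show ¬ (a = i ∧ b = k ∧ c = j) by omega),
    if_neg (show ¬ (a = j ∧ b = i ∧ c = k) by omega),
    if_neg (show ¬ (a = j ∧ b = k ∧ c = i) by omega),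
    if_neg (show ¬ (a = k ∧ b = i ∧ c = j) by omega),
    if_neg (show ¬ (a = k ∧ b = j ∧ c = i) by omega)]
  simp only [sub_zero, add_zero]

end Basics


section KernelLemma

set_option linter.unusedSimpArgs false

variable {F : Type*} [Field F] {M : Type*} [AddCommGroup M] [Module F M]

set_option maxHeartbeats 4000000 in
theorem wedge_ct_sym [CharZero F] (e : Basis (Fin 7) F M) (s : F) (hs : s = 1 ∨ s = -1) (v : M)
    (f : Dual F M) (h : ExteriorAlgebra.ι F v * ct f (PsiS s e) = 0) :
    ∃ t : Fin 7 → F, (∀ i, t i * t i = 1) ∧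
      ∀ i j, e.repr v i * f (e j) + t i * t j * (e.repr v j * f (e i)) = 0 := by
  have k := fun i j k l => congrArg (co4 e i j k l) h
  simp only [PsiS, ct_wedge4, map_zero, co4_v, map_add, map_sub, map_smul, smul_eq_mul] at k
  have h0123 := k 0 1 2 3
  have h0124 := k 0 1 2 4
  have h0125 := k 0 1 2 5
  have h0126 := k 0 1 2 6
  have h0134 := k 0 1 3 4
  have h0135 := k 0 1 3 5
  have h0136 := k 0 1 3 6
  have h0145 := k 0 1 4 5
  have h0146 := k 0 1 4 6
  have h0156 := k 0 1 5 6
  have h0234 := k 0 2 3 4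
  have h0235 := k 0 2 3 5
  have h0236 := k 0 2 3 6
  have h0245 := k 0 2 4 5
  have h0246 := k 0 2 4 6
  have h0256 := k 0 2 5 6
  have h0345 := k 0 3 4 5
  have h0346 := k 0 3 4 6
  have h0356 := k 0 3 5 6
  have h0456 := k 0 4 5 6
  have h1234 := k 1 2 3 4
  have h1235 := k 1 2 3 5
  have h1236 := k 1 2 3 6
  have h1245 := k 1 2 4 5
  have h1246 := k 1 2 4 6
  have h1256 := k 1 2 5 6
  have h1345 := k 1 3 4 5
  have h1346 := k 1 3 4 6
  have h1356 := k 1 3 5 6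
  have h1456 := k 1 4 5 6
  have h2345 := k 2 3 4 5
  have h2346 := k 2 3 4 6
  have h2356 := k 2 3 5 6
  have h2456 := k 2 4 5 6
  have h3456 := k 3 4 5 6
  clear k h
  simp only [co3_basis e, Fin.reduceLT, Fin.reduceEq, reduceIte, and_self, false_and, and_false,
    mul_zero, sub_zero, zero_sub, neg_zero, add_zero, zero_add, mul_one, mul_neg] at h0123 h0124 h0125 h0126 h0134 h0135 h0136 h0145 h0146 h0156 h0234 h0235 h0236 h0245 h0246 h0256 h0345 h0346 h0356 h0456 h1234 h1235 h1236 h1245 h1246 h1256 h1345 h1346 h1356 h1456 h2345 h2346 h2356 h2456 h3456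
  generalize hx : (fun i => e.repr v i) = x
  generalize hy : (fun i => f (e i)) = y
  simp only [fun i => show e.repr v i = x i from congrFun hx i,
    fun i => show f (e i) = y i from congrFun hy i] at *
  clear hx hy
  rcases hs with rfl | rfl
  · refine ⟨![1, 1, 1, 1, 1, 1, 1], ?_, ?_⟩
    · simp [Fin.forall_fin_succ]
    have g00 : x 0 * y 0 + x 0 * y 0 = 0 := by
      linear_combination (h0123 + h0145 + h0256 + h0346 - h1246 + h1356 - h2345) / 2
    have g01 : x 0 * y 1 + x 1 * y 0 = 0 := by
      linear_combination (h0246 - h0356 + h1256 + h1346) / 2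
    have g02 : x 0 * y 2 + x 2 * y 0 = 0 := by
      linear_combination (-h0146 + h0345 - h1245 + h2346) / 2
    have g03 : x 0 * y 3 + x 3 * y 0 = 0 := by
      linear_combination (h0156 - h0245 - h1345 - h2356) / 2
    have g04 : x 0 * y 4 + x 4 * y 0 = 0 := by
      linear_combination (h0126 + h0235 - h1234 - h2456) / 2
    have g05 : x 0 * y 5 + x 5 * y 0 = 0 := by
      linear_combination (-h0136 - h0234 - h1235 + h3456) / 2
    have g06 : x 0 * y 6 + x 6 * y 0 = 0 := by
      linear_combination (-h0124 + h0135 - h1236 - h1456) / 2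
    have g11 : x 1 * y 1 + x 1 * y 1 = 0 := by
      linear_combination (h0123 + h0145 - h0256 - h0346 + h1246 - h1356 - h2345) / 2
    have g12 : x 1 * y 2 + x 2 * y 1 = 0 := by
      linear_combination (h0156 + h0245 + h1345 - h2356) / 2
    have g13 : x 1 * y 3 + x 3 * y 1 = 0 := by
      linear_combination (h0146 + h0345 - h1245 - h2346) / 2
    have g14 : x 1 * y 4 + x 4 * y 1 = 0 := by
      linear_combination (-h0136 + h0234 + h1235 + h3456) / 2
    have g15 : x 1 * y 5 + x 5 * y 1 = 0 := by
      linear_combination (-h0126 + h0235 - h1234 + h2456) / 2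
    have g16 : x 1 * y 6 + x 6 * y 1 = 0 := by
      linear_combination (h0125 + h0134 + h0236 + h0456) / 2
    have g22 : x 2 * y 2 + x 2 * y 2 = 0 := by
      linear_combination (h0123 - h0145 + h0256 - h0346 + h1246 + h1356 + h2345) / 2
    have g23 : x 2 * y 3 + x 3 * y 2 = 0 := by
      linear_combination (h0246 + h0356 - h1256 + h1346) / 2
    have g24 : x 2 * y 4 + x 4 * y 2 = 0 := by
      linear_combination (h0125 - h0134 - h0236 + h0456) / 2
    have g25 : x 2 * y 5 + x 5 * y 2 = 0 := by
      linear_combination (-h0124 - h0135 + h1236 - h1456) / 2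
    have g26 : x 2 * y 6 + x 6 * y 2 = 0 := by
      linear_combination (-h0136 + h0234 - h1235 - h3456) / 2
    have g33 : x 3 * y 3 + x 3 * y 3 = 0 := by
      linear_combination (h0123 - h0145 - h0256 + h0346 - h1246 - h1356 + h2345) / 2
    have g34 : x 3 * y 4 + x 4 * y 3 = 0 := by
      linear_combination (h0124 + h0135 + h1236 - h1456) / 2
    have g35 : x 3 * y 5 + x 5 * y 3 = 0 := by
      linear_combination (h0125 - h0134 + h0236 - h0456) / 2
    have g36 : x 3 * y 6 + x 6 * y 3 = 0 := by
      linear_combination (h0126 - h0235 - h1234 + h2456) / 2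
    have g44 : x 4 * y 4 + x 4 * y 4 = 0 := by
      linear_combination (-h0123 + h0145 - h0256 + h0346 + h1246 + h1356 + h2345) / 2
    have g45 : x 4 * y 5 + x 5 * y 4 = 0 := by
      linear_combination (h0246 + h0356 + h1256 - h1346) / 2
    have g46 : x 4 * y 6 + x 6 * y 4 = 0 := by
      linear_combination (-h0156 - h0245 + h1345 - h2356) / 2
    have g55 : x 5 * y 5 + x 5 * y 5 = 0 := by
      linear_combination (-h0123 + h0145 + h0256 - h0346 - h1246 - h1356 + h2345) / 2
    have g56 : x 5 * y 6 + x 6 * y 5 = 0 := by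
      linear_combination (h0146 + h0345 + h1245 + h2346) / 2
    have g66 : x 6 * y 6 + x 6 * y 6 = 0 := by
      linear_combination (-h0123 - h0145 + h0256 + h0346 + h1246 - h1356 - h2345) / 2
    clear h0123 h0124 h0125 h0126 h0134 h0135 h0136 h0145 h0146 h0156 h0234 h0235 h0236 h0245 h0246 h0256 h0345 h0346 h0356 h0456 h1234 h1235 h1236 h1245 h1246 h1256 h1345 h1346 h1356 h1456 h2345 h2346 h2356 h2456 h3456
    have g10 : x 1 * y 0 + x 0 * y 1 = 0 := by linear_combination g01
    have g20 : x 2 * y 0 + x 0 * y 2 = 0 := by linear_combination g02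
    have g21 : x 2 * y 1 + x 1 * y 2 = 0 := by linear_combination g12
    have g30 : x 3 * y 0 + x 0 * y 3 = 0 := by linear_combination g03
    have g31 : x 3 * y 1 + x 1 * y 3 = 0 := by linear_combination g13
    have g32 : x 3 * y 2 + x 2 * y 3 = 0 := by linear_combination g23
    have g40 : x 4 * y 0 + x 0 * y 4 = 0 := by linear_combination g04
    have g41 : x 4 * y 1 + x 1 * y 4 = 0 := by linear_combination g14
    have g42 : x 4 * y 2 + x 2 * y 4 = 0 := by linear_combination g24
    have g43 : x 4 * y 3 + x 3 * y 4 = 0 := by linear_combination g34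
    have g50 : x 5 * y 0 + x 0 * y 5 = 0 := by linear_combination g05
    have g51 : x 5 * y 1 + x 1 * y 5 = 0 := by linear_combination g15
    have g52 : x 5 * y 2 + x 2 * y 5 = 0 := by linear_combination g25
    have g53 : x 5 * y 3 + x 3 * y 5 = 0 := by linear_combination g35
    have g54 : x 5 * y 4 + x 4 * y 5 = 0 := by linear_combination g45
    have g60 : x 6 * y 0 + x 0 * y 6 = 0 := by linear_combination g06
    have g61 : x 6 * y 1 + x 1 * y 6 = 0 := by linear_combination g16
    have g62 : x 6 * y 2 + x 2 * y 6 = 0 := by linear_combination g26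
    have g63 : x 6 * y 3 + x 3 * y 6 = 0 := by linear_combination g36
    have g64 : x 6 * y 4 + x 4 * y 6 = 0 := by linear_combination g46
    have g65 : x 6 * y 5 + x 5 * y 6 = 0 := by linear_combination g56
    intro i j
    fin_cases i <;> fin_cases j
    · simpa [sub_eq_add_neg] using g00
    · simpa [sub_eq_add_neg] using g01
    · simpa [sub_eq_add_neg] using g02
    · simpa [sub_eq_add_neg] using g03
    · simpa [sub_eq_add_neg] using g04
    · simpa [sub_eq_add_neg] using g05
    · simpa [sub_eq_add_neg] using g06
    · simpa [sub_eq_add_neg] using g10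
    · simpa [sub_eq_add_neg] using g11
    · simpa [sub_eq_add_neg] using g12
    · simpa [sub_eq_add_neg] using g13
    · simpa [sub_eq_add_neg] using g14
    · simpa [sub_eq_add_neg] using g15
    · simpa [sub_eq_add_neg] using g16
    · simpa [sub_eq_add_neg] using g20
    · simpa [sub_eq_add_neg] using g21
    · simpa [sub_eq_add_neg] using g22
    · simpa [sub_eq_add_neg] using g23
    · simpa [sub_eq_add_neg] using g24
    · simpa [sub_eq_add_neg] using g25
    · simpa [sub_eq_add_neg] using g26
    · simpa [sub_eq_add_neg] using g30
    · simpa [sub_eq_add_neg] using g31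
    · simpa [sub_eq_add_neg] using g32
    · simpa [sub_eq_add_neg] using g33
    · simpa [sub_eq_add_neg] using g34
    · simpa [sub_eq_add_neg] using g35
    · simpa [sub_eq_add_neg] using g36
    · simpa [sub_eq_add_neg] using g40
    · simpa [sub_eq_add_neg] using g41
    · simpa [sub_eq_add_neg] using g42
    · simpa [sub_eq_add_neg] using g43
    · simpa [sub_eq_add_neg] using g44
    · simpa [sub_eq_add_neg] using g45
    · simpa [sub_eq_add_neg] using g46
    · simpa [sub_eq_add_neg] using g50
    · simpa [sub_eq_add_neg] using g51
    · simpa [sub_eq_add_neg] using g52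
    · simpa [sub_eq_add_neg] using g53
    · simpa [sub_eq_add_neg] using g54
    · simpa [sub_eq_add_neg] using g55
    · simpa [sub_eq_add_neg] using g56
    · simpa [sub_eq_add_neg] using g60
    · simpa [sub_eq_add_neg] using g61
    · simpa [sub_eq_add_neg] using g62
    · simpa [sub_eq_add_neg] using g63
    · simpa [sub_eq_add_neg] using g64
    · simpa [sub_eq_add_neg] using g65
    · simpa [sub_eq_add_neg] using g66
  · refine ⟨![1, 1, 1, 1, -1, -1, -1], ?_, ?_⟩
    · simp [Fin.forall_fin_succ]
    have g00 : x 0 * y 0 + x 0 * y 0 = 0 := by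
      linear_combination (h0123 - h0145 + h0256 + h0346 - h1246 + h1356 + h2345) / 2
    have g01 : x 0 * y 1 + x 1 * y 0 = 0 := by
      linear_combination (h0246 - h0356 + h1256 + h1346) / 2
    have g02 : x 0 * y 2 + x 2 * y 0 = 0 := by
      linear_combination (-h0146 - h0345 + h1245 + h2346) / 2
    have g03 : x 0 * y 3 + x 3 * y 0 = 0 := by
      linear_combination (h0156 + h0245 + h1345 - h2356) / 2
    have g04 : x 0 * y 4 - x 4 * y 0 = 0 := by
      linear_combination (h0126 - h0235 + h1234 + h2456) / 2
    have g05 : x 0 * y 5 - x 5 * y 0 = 0 := by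
      linear_combination (-h0136 + h0234 + h1235 - h3456) / 2
    have g06 : x 0 * y 6 - x 6 * y 0 = 0 := by
      linear_combination (-h0124 + h0135 + h1236 - h1456) / 2
    have g11 : x 1 * y 1 + x 1 * y 1 = 0 := by
      linear_combination (h0123 - h0145 - h0256 - h0346 + h1246 - h1356 + h2345) / 2
    have g12 : x 1 * y 2 + x 2 * y 1 = 0 := by
      linear_combination (h0156 - h0245 - h1345 - h2356) / 2
    have g13 : x 1 * y 3 + x 3 * y 1 = 0 := by
      linear_combination (h0146 - h0345 + h1245 - h2346) / 2
    have g14 : x 1 * y 4 - x 4 * y 1 = 0 := by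
      linear_combination (-h0136 - h0234 - h1235 - h3456) / 2
    have g15 : x 1 * y 5 - x 5 * y 1 = 0 := by
      linear_combination (-h0126 - h0235 + h1234 - h2456) / 2
    have g16 : x 1 * y 6 - x 6 * y 1 = 0 := by
      linear_combination (h0125 + h0134 - h0236 + h0456) / 2
    have g22 : x 2 * y 2 + x 2 * y 2 = 0 := by
      linear_combination (h0123 + h0145 + h0256 - h0346 + h1246 + h1356 - h2345) / 2
    have g23 : x 2 * y 3 + x 3 * y 2 = 0 := by
      linear_combination (h0246 + h0356 - h1256 + h1346) / 2
    have g24 : x 2 * y 4 - x 4 * y 2 = 0 := by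
      linear_combination (-h0125 + h0134 - h0236 - h0456) / 2
    have g25 : x 2 * y 5 - x 5 * y 2 = 0 := by
      linear_combination (h0124 + h0135 + h1236 + h1456) / 2
    have g26 : x 2 * y 6 - x 6 * y 2 = 0 := by
      linear_combination (h0136 + h0234 - h1235 - h3456) / 2
    have g33 : x 3 * y 3 + x 3 * y 3 = 0 := by
      linear_combination (h0123 + h0145 - h0256 + h0346 - h1246 - h1356 - h2345) / 2
    have g34 : x 3 * y 4 - x 4 * y 3 = 0 := by
      linear_combination (-h0124 - h0135 + h1236 + h1456) / 2
    have g35 : x 3 * y 5 - x 5 * y 3 = 0 := by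
      linear_combination (-h0125 + h0134 + h0236 + h0456) / 2
    have g36 : x 3 * y 6 - x 6 * y 3 = 0 := by
      linear_combination (-h0126 - h0235 - h1234 + h2456) / 2
    have g44 : x 4 * y 4 + x 4 * y 4 = 0 := by
      linear_combination (-h0123 - h0145 - h0256 + h0346 + h1246 + h1356 - h2345) / 2
    have g45 : x 4 * y 5 + x 5 * y 4 = 0 := by
      linear_combination (h0246 + h0356 + h1256 - h1346) / 2
    have g46 : x 4 * y 6 + x 6 * y 4 = 0 := by
      linear_combination (h0156 - h0245 + h1345 + h2356) / 2
    have g55 : x 5 * y 5 + x 5 * y 5 = 0 := by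
      linear_combination (-h0123 - h0145 + h0256 - h0346 - h1246 - h1356 - h2345) / 2
    have g56 : x 5 * y 6 + x 6 * y 5 = 0 := by
      linear_combination (-h0146 + h0345 + h1245 - h2346) / 2
    have g66 : x 6 * y 6 + x 6 * y 6 = 0 := by
      linear_combination (-h0123 + h0145 + h0256 + h0346 + h1246 - h1356 + h2345) / 2
    clear h0123 h0124 h0125 h0126 h0134 h0135 h0136 h0145 h0146 h0156 h0234 h0235 h0236 h0245 h0246 h0256 h0345 h0346 h0356 h0456 h1234 h1235 h1236 h1245 h1246 h1256 h1345 h1346 h1356 h1456 h2345 h2346 h2356 h2456 h3456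
    have g10 : x 1 * y 0 + x 0 * y 1 = 0 := by linear_combination g01
    have g20 : x 2 * y 0 + x 0 * y 2 = 0 := by linear_combination g02
    have g21 : x 2 * y 1 + x 1 * y 2 = 0 := by linear_combination g12
    have g30 : x 3 * y 0 + x 0 * y 3 = 0 := by linear_combination g03
    have g31 : x 3 * y 1 + x 1 * y 3 = 0 := by linear_combination g13
    have g32 : x 3 * y 2 + x 2 * y 3 = 0 := by linear_combination g23
    have g40 : x 4 * y 0 - x 0 * y 4 = 0 := by linear_combination -g04
    have g41 : x 4 * y 1 - x 1 * y 4 = 0 := by linear_combination -g14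
    have g42 : x 4 * y 2 - x 2 * y 4 = 0 := by linear_combination -g24
    have g43 : x 4 * y 3 - x 3 * y 4 = 0 := by linear_combination -g34
    have g50 : x 5 * y 0 - x 0 * y 5 = 0 := by linear_combination -g05
    have g51 : x 5 * y 1 - x 1 * y 5 = 0 := by linear_combination -g15
    have g52 : x 5 * y 2 - x 2 * y 5 = 0 := by linear_combination -g25
    have g53 : x 5 * y 3 - x 3 * y 5 = 0 := by linear_combination -g35
    have g54 : x 5 * y 4 + x 4 * y 5 = 0 := by linear_combination g45
    have g60 : x 6 * y 0 - x 0 * y 6 = 0 := by linear_combination -g06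
    have g61 : x 6 * y 1 - x 1 * y 6 = 0 := by linear_combination -g16
    have g62 : x 6 * y 2 - x 2 * y 6 = 0 := by linear_combination -g26
    have g63 : x 6 * y 3 - x 3 * y 6 = 0 := by linear_combination -g36
    have g64 : x 6 * y 4 + x 4 * y 6 = 0 := by linear_combination g46
    have g65 : x 6 * y 5 + x 5 * y 6 = 0 := by linear_combination g56
    intro i j
    fin_cases i <;> fin_cases j
    · simpa [sub_eq_add_neg] using g00
    · simpa [sub_eq_add_neg] using g01
    · simpa [sub_eq_add_neg] using g02
    · simpa [sub_eq_add_neg] using g03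
    · simpa [sub_eq_add_neg] using g04
    · simpa [sub_eq_add_neg] using g05
    · simpa [sub_eq_add_neg] using g06
    · simpa [sub_eq_add_neg] using g10
    · simpa [sub_eq_add_neg] using g11
    · simpa [sub_eq_add_neg] using g12
    · simpa [sub_eq_add_neg] using g13
    · simpa [sub_eq_add_neg] using g14
    · simpa [sub_eq_add_neg] using g15
    · simpa [sub_eq_add_neg] using g16
    · simpa [sub_eq_add_neg] using g20
    · simpa [sub_eq_add_neg] using g21
    · simpa [sub_eq_add_neg] using g22
    · simpa [sub_eq_add_neg] using g23
    · simpa [sub_eq_add_neg] using g24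
    · simpa [sub_eq_add_neg] using g25
    · simpa [sub_eq_add_neg] using g26
    · simpa [sub_eq_add_neg] using g30
    · simpa [sub_eq_add_neg] using g31
    · simpa [sub_eq_add_neg] using g32
    · simpa [sub_eq_add_neg] using g33
    · simpa [sub_eq_add_neg] using g34
    · simpa [sub_eq_add_neg] using g35
    · simpa [sub_eq_add_neg] using g36
    · simpa [sub_eq_add_neg] using g40
    · simpa [sub_eq_add_neg] using g41
    · simpa [sub_eq_add_neg] using g42
    · simpa [sub_eq_add_neg] using g43
    · simpa [sub_eq_add_neg] using g44
    · simpa [sub_eq_add_neg] using g45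
    · simpa [sub_eq_add_neg] using g46
    · simpa [sub_eq_add_neg] using g50
    · simpa [sub_eq_add_neg] using g51
    · simpa [sub_eq_add_neg] using g52
    · simpa [sub_eq_add_neg] using g53
    · simpa [sub_eq_add_neg] using g54
    · simpa [sub_eq_add_neg] using g55
    · simpa [sub_eq_add_neg] using g56
    · simpa [sub_eq_add_neg] using g60
    · simpa [sub_eq_add_neg] using g61
    · simpa [sub_eq_add_neg] using g62
    · simpa [sub_eq_add_neg] using g63
    · simpa [sub_eq_add_neg] using g64
    · simpa [sub_eq_add_neg] using g65
    · simpa [sub_eq_add_neg] using g66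

theorem wedge_ct [CharZero F] (e : Basis (Fin 7) F M) (s : F) (hs : s = 1 ∨ s = -1) (v : M)
    (f : Dual F M) (h : ExteriorAlgebra.ι F v * ct f (PsiS s e) = 0) : v = 0 ∨ f = 0 := by
  obtain ⟨t, ht, H⟩ := wedge_ct_sym e s hs v f h
  by_contra hc
  push Not at hc
  obtain ⟨hv, hf⟩ := hc
  apply hf
  obtain ⟨i, hi⟩ : ∃ i, e.repr v i ≠ 0 := by
    by_contra hh
    push Not at hh
    exact hv (e.repr.injective (by ext i; simp [hh i]))
  have h0 : f (e i) = 0 := by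
    have h2 := H i i
    rw [ht] at h2
    have h3 : e.repr v i * f (e i) = 0 := by linear_combination h2 / 2
    exact (mul_eq_zero.1 h3).resolve_left hi
  refine e.ext fun j => ?_
  have h2 := H i j
  rw [h0] at h2
  simpa [hi] using h2

end KernelLemma


section CrossLemma

set_option linter.unusedSimpArgs false

variable {F : Type*} [Field F] {M : Type*} [AddCommGroup M] [Module F M]

theorem co4_basis (e : Basis (Fin 7) F M) (i j k l a b c d : Fin 7) (h1 : i < j) (h2 : j < k)
    (h3 : k < l) (h4 : a < b) (h5 : b < c) (h6 : c < d) :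
    co4 e i j k l (wedge4 e a b c d)
      = if a = i ∧ b = j ∧ c = k ∧ d = l then 1 else 0 := by
  rw [wedge4, mul_assoc, mul_assoc, co4_v, co3_basis e j k l b c d h2 h3 h5 h6,
    co3_basis e i k l b c d (h1.trans h2) h3 h5 h6,
    co3_basis e i j l b c d h1 (h2.trans h3) h5 h6, co3_basis e i j k b c d h1 h2 h5 h6]
  have q : ∀ (x : Fin 7) (p : Prop) [Decidable p], e.repr (e a) x * (if p then (1 : F) else 0)
      = if a = x ∧ p then 1 else 0 := by
    intro x p _
    simp only [Basis.repr_self, Finsupp.single_apply]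
    by_cases hx : a = x <;> by_cases hp : p <;> simp [hx, hp]
  simp only [q]
  rw [if_neg (show ¬ (a = j ∧ b = i ∧ c = k ∧ d = l) by omega),
    if_neg (show ¬ (a = k ∧ b = i ∧ c = j ∧ d = l) by omega),
    if_neg (show ¬ (a = l ∧ b = i ∧ c = j ∧ d = k) by omega)]
  simp only [sub_zero, add_zero]

/-- coefficient extraction, degree five -/
noncomputable def co5 (e : Basis (Fin 7) F M) (i j k l m : Fin 7) : ExteriorAlgebra F M →ₗ[F] F :=
  co4 e j k l m ∘ₗ ct (e.coord i)

/-- coefficient extraction, degree six -/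
noncomputable def co6 (e : Basis (Fin 7) F M) (i j k l m n : Fin 7) :
    ExteriorAlgebra F M →ₗ[F] F :=
  co5 e j k l m n ∘ₗ ct (e.coord i)

theorem co5_v (e : Basis (Fin 7) F M) (i j k l m : Fin 7) (v : M) (Y : ExteriorAlgebra F M) :
    co5 e i j k l m (ExteriorAlgebra.ι F v * Y) =
      e.repr v i * co4 e j k l m Y - e.repr v j * co4 e i k l m Y + e.repr v k * co4 e i j l m Y
        - e.repr v l * co4 e i j k m Y + e.repr v m * co4 e i j k l Y := by
  rw [co5, LinearMap.comp_apply, ctv, map_sub, map_smul, co4_v]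
  simp only [co4, co3, LinearMap.comp_apply, smul_eq_mul]
  ring

theorem co6_v (e : Basis (Fin 7) F M) (i j k l m n : Fin 7) (v : M) (Y : ExteriorAlgebra F M) :
    co6 e i j k l m n (ExteriorAlgebra.ι F v * Y) =
      e.repr v i * co5 e j k l m n Y - e.repr v j * co5 e i k l m n Y
        + e.repr v k * co5 e i j l m n Y - e.repr v l * co5 e i j k m n Y
        + e.repr v m * co5 e i j k l n Y - e.repr v n * co5 e i j k l m Y := by
  rw [co6, LinearMap.comp_apply, ctv, map_sub, map_smul, co5_v]
  simp only [co5, co4, LinearMap.comp_apply, smul_eq_mul]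
  ring

set_option maxHeartbeats 4000000 in
theorem cross_zero {M : Type*} [AddCommGroup M] [Module ℝ M] (e : Basis (Fin 7) ℝ M) (a b : M)
    (h : ExteriorAlgebra.ι ℝ a * (ExteriorAlgebra.ι ℝ b * PsiS (1 : ℝ) e) = 0) (i j : Fin 7) :
    e.repr a i * e.repr b j = e.repr a j * e.repr b i := by
  have k := fun i j k l m n => congrArg (co6 e i j k l m n) h
  simp only [PsiS, map_zero, co6_v, co5_v, map_add, map_sub, map_smul, smul_eq_mul, one_mul] at k
  have h0 := k 1 2 3 4 5 6
  have h1 := k 0 2 3 4 5 6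
  have h2 := k 0 1 3 4 5 6
  have h3 := k 0 1 2 4 5 6
  have h4 := k 0 1 2 3 5 6
  have h5 := k 0 1 2 3 4 6
  have h6 := k 0 1 2 3 4 5
  clear k h
  simp only [co4_basis e, Fin.reduceLT, Fin.reduceEq, reduceIte, and_self, false_and, and_false,
    mul_zero, sub_zero, zero_sub, neg_zero, add_zero, zero_add, mul_one, mul_neg] at h0 h1 h2 h3 h4 h5 h6
  generalize hx : (fun i => e.repr a i) = x
  generalize hy : (fun i => e.repr b i) = y
  simp only [fun i => show e.repr a i = x i from congrFun hx i,
    fun i => show e.repr b i = y i from congrFun hy i] at *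
  clear hx hy
  have g0 : (x 1 * y 6 - x 6 * y 1) + (x 2 * y 4 - x 4 * y 2) - (x 3 * y 5 - x 5 * y 3) = 0 := by linear_combination h0
  have g1 : (x 0 * y 6 - x 6 * y 0) + (x 2 * y 5 - x 5 * y 2) + (x 3 * y 4 - x 4 * y 3) = 0 := by linear_combination h1
  have g2 : -(x 0 * y 4 - x 4 * y 0) + (x 1 * y 5 - x 5 * y 1) + (x 3 * y 6 - x 6 * y 3) = 0 := by linear_combination h2
  have g3 : -(x 0 * y 5 - x 5 * y 0) - (x 1 * y 4 - x 4 * y 1) + (x 2 * y 6 - x 6 * y 2) = 0 := by linear_combination h3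
  have g4 : (x 0 * y 2 - x 2 * y 0) - (x 1 * y 3 - x 3 * y 1) + (x 5 * y 6 - x 6 * y 5) = 0 := by linear_combination h4
  have g5 : (x 0 * y 3 - x 3 * y 0) + (x 1 * y 2 - x 2 * y 1) + (x 4 * y 6 - x 6 * y 4) = 0 := by linear_combination h5
  have g6 : (x 0 * y 1 - x 1 * y 0) + (x 2 * y 3 - x 3 * y 2) + (x 4 * y 5 - x 5 * y 4) = 0 := by linear_combination h6
  have hs : ∑ i, ∑ j, (x i * y j - x j * y i) ^ 2 = 0 := by
    simp only [Fin.sum_univ_seven]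
    linear_combination 2 * (((x 1 * y 6 - x 6 * y 1) + (x 2 * y 4 - x 4 * y 2) - (x 3 * y 5 - x 5 * y 3)) * g0
      + ((x 0 * y 6 - x 6 * y 0) + (x 2 * y 5 - x 5 * y 2) + (x 3 * y 4 - x 4 * y 3)) * g1
      + (-(x 0 * y 4 - x 4 * y 0) + (x 1 * y 5 - x 5 * y 1) + (x 3 * y 6 - x 6 * y 3)) * g2
      + (-(x 0 * y 5 - x 5 * y 0) - (x 1 * y 4 - x 4 * y 1) + (x 2 * y 6 - x 6 * y 2)) * g3
      + ((x 0 * y 2 - x 2 * y 0) - (x 1 * y 3 - x 3 * y 1) + (x 5 * y 6 - x 6 * y 5)) * g4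
      + ((x 0 * y 3 - x 3 * y 0) + (x 1 * y 2 - x 2 * y 1) + (x 4 * y 6 - x 6 * y 4)) * g5
      + ((x 0 * y 1 - x 1 * y 0) + (x 2 * y 3 - x 3 * y 2) + (x 4 * y 5 - x 5 * y 4)) * g6)
  rw [Finset.sum_eq_zero_iff_of_nonneg
    (fun i _ => Finset.sum_nonneg fun j _ => sq_nonneg _)] at hs
  have h2 := hs i (Finset.mem_univ _)
  rw [Finset.sum_eq_zero_iff_of_nonneg (fun j _ => sq_nonneg _)] at h2
  have h3 := h2 j (Finset.mem_univ _)
  exact sub_eq_zero.1 (pow_eq_zero_iff (two_ne_zero) |>.1 h3)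

end CrossLemma


section CompactM

set_option linter.unusedSimpArgs false

variable {F : Type*} [Field F] {M : Type*} [AddCommGroup M] [Module F M]

/-- coefficient extraction, degree two -/
noncomputable def co2 (e : Basis (Fin 7) F M) (i j : Fin 7) : ExteriorAlgebra F M →ₗ[F] F :=
  (ExteriorAlgebra.algebraMapInv (R := F) (M := M)).toLinearMap ∘ₗ
    ct (e.coord j) ∘ₗ ct (e.coord i)

theorem co2_gen (e : Basis (Fin 7) F M) (i j : Fin 7) (a b : M) :
    co2 e i j (ExteriorAlgebra.ι F a * ExteriorAlgebra.ι F b)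
      = e.repr a i * e.repr b j - e.repr a j * e.repr b i := by
  simp only [co2, LinearMap.comp_apply, AlgHom.toLinearMap_apply, ctv, ctv', ct_sub, ct_smul,
    map_sub, map_smul, smul_eq_mul, ai_ι_mul, ct_alg, mul_zero, sub_zero,
    ExteriorAlgebra.algebraMap_leftInverse _ _, Algebra.algebraMap_eq_smul_one, mul_smul_comm,
    mul_one, map_one, map_zero, ct_1, smul_zero]
  ring

theorem co2_ct (e : Basis (Fin 7) F M) (i j : Fin 7) (g : Dual F M) (a b c : M) :
    co2 e i j (ct g (ExteriorAlgebra.ι F a * (ExteriorAlgebra.ι F b * ExteriorAlgebra.ι F c)))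
      = g a * (e.repr b i * e.repr c j - e.repr b j * e.repr c i)
       - g b * (e.repr a i * e.repr c j - e.repr a j * e.repr c i)
       + g c * (e.repr a i * e.repr b j - e.repr a j * e.repr b i) := by
  simp only [ct_ι_mul, ct_ι, Algebra.algebraMap_eq_smul_one, mul_sub, mul_smul_comm, mul_one,
    map_sub, map_smul, co2_gen, smul_eq_mul]
  ring

theorem plucker (e : Basis (Fin 7) F M) (g : Dual F M) (a b c : M) (X : ExteriorAlgebra F M)
    (h : X = ct g (ExteriorAlgebra.ι F a * (ExteriorAlgebra.ι F b * ExteriorAlgebra.ι F c)))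
    (i j k l : Fin 7) :
    co2 e i j X * co2 e k l X - co2 e i k X * co2 e j l X + co2 e i l X * co2 e j k X = 0 := by
  subst h
  simp only [co2_ct]
  ring

set_option maxHeartbeats 4000000 in
theorem compact_m {M : Type*} [AddCommGroup M] [Module ℝ M] (e : Basis (Fin 7) ℝ M)
    (f g : Dual ℝ M) (a b c : M)
    (h : ct g (ct f (PsiS (1 : ℝ) e))
      = ct g (ExteriorAlgebra.ι ℝ a * (ExteriorAlgebra.ι ℝ b * ExteriorAlgebra.ι ℝ c)))
    (i j : Fin 7) : f (e i) * g (e j) = f (e j) * g (e i) := by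
  have p := plucker e g a b c _ h
  clear h
  have h0 := p 0 1 2 3
  have h1 := p 0 1 4 5
  have h2 := p 2 3 4 5
  have h3 := p 1 3 5 6
  have h4 := p 1 2 4 6
  have h5 := p 0 3 4 6
  have h6 := p 0 2 5 6
  clear p
  simp only [PsiS, map_add, map_sub, map_smul, ct_wedge4, co2_ct, smul_eq_mul, one_mul,
    Basis.repr_self, Finsupp.single_apply, Fin.reduceEq, reduceIte, mul_zero, sub_zero, zero_sub,
    neg_zero, add_zero, zero_add, mul_one, mul_neg, neg_neg] at h0 h1 h2 h3 h4 h5 h6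
  generalize hx : (fun i => f (e i)) = x
  generalize hy : (fun i => g (e i)) = y
  simp only [fun i => show f (e i) = x i from congrFun hx i,
    fun i => show g (e i) = y i from congrFun hy i] at *
  clear hx hy
  have hs : ∑ i, ∑ j, (x i * y j - x j * y i) ^ 2 = 0 := by
    simp only [Fin.sum_univ_seven]
    linear_combination 2 * (h0 + h1 + h2 - h3 + h4 + h5 + h6)
  rw [Finset.sum_eq_zero_iff_of_nonneg
    (fun i _ => Finset.sum_nonneg fun j _ => sq_nonneg _)] at hs
  have h2 := hs i (Finset.mem_univ _)
  rw [Finset.sum_eq_zero_iff_of_nonneg (fun j _ => sq_nonneg _)] at h2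
  have h3 := h2 j (Finset.mem_univ _)
  exact sub_eq_zero.1 (pow_eq_zero_iff (two_ne_zero) |>.1 h3)

end CompactM


section General

open ExteriorAlgebra (ι)

variable {F : Type*} [Field F] {M : Type*} [AddCommGroup M] [Module F M]

theorem ct_mem_pow (W : Submodule F M) (f : Dual F M) (hf : ∀ w ∈ W, f w = 0) (k : ℕ)
    (X : ExteriorAlgebra F M) (hX : X ∈ (W.map (ι F)) ^ k) : ct f X = 0 := by
  induction hX using Submodule.pow_induction_on_left' with
  | algebraMap r => exact ct_alg f r
  | add x y i hx hy h1 h2 => rw [map_add, h1, h2, add_zero]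
  | mem_mul m hm i x hx h =>
    obtain ⟨w, hw, rfl⟩ := hm
    rw [ct_ι_mul, h, hf w hw]; simp

theorem mul_mem_pow (W : Submodule F M) (v : M) (k : ℕ)
    (X : ExteriorAlgebra F M) (hX : X ∈ (W.map (ι F)) ^ k) :
    X * ι F v = (-1 : F) ^ k • (ι F v * X) := by
  induction hX using Submodule.pow_induction_on_left' with
  | algebraMap r => simp [Algebra.commutes]
  | add x y i hx hy h1 h2 => rw [add_mul, h1, h2, mul_add, smul_add]
  | mem_mul m hm i x hx h =>
    obtain ⟨w, hw, rfl⟩ := hm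
    rw [mul_assoc, h, mul_smul_comm, ι_swap_mul, pow_succ]
    simp

theorem prod_mem_pow (W : Submodule F M) (k : ℕ) (v : Fin k → M) (hv : ∀ i, v i ∈ W) :
    (List.ofFn fun i => ι F (v i)).prod ∈ (W.map (ι F)) ^ k := by
  induction k with
  | zero => simp
  | succ k ih =>
    rw [List.ofFn_succ, List.prod_cons, pow_succ']
    exact Submodule.mul_mem_mul ⟨v 0, hv 0, rfl⟩ (ih (fun i => v i.succ) fun i => hv _)

theorem ct_prod (f : Dual F M) (k : ℕ) (v : Fin k → M) (hv : ∀ i, f (v i) = 0) :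
    ct f (List.ofFn fun i => ι F (v i)).prod = 0 :=
  ct_mem_pow (LinearMap.ker f) f (fun _ h => h) k _ (prod_mem_pow _ k v hv)

theorem prod_dep (k : ℕ) (v : Fin k → M) (hv : ¬ LinearIndependent F v) :
    (List.ofFn fun i => ι F (v i)).prod = 0 := by
  rw [← ExteriorAlgebra.ιMulti_apply]
  exact AlternatingMap.map_linearDependent _ _ hv

theorem span_mul_prod (k : ℕ) (v : Fin k → M) (u : M) (hu : u ∈ Submodule.span F (Set.range v)) :
    ι F u * (List.ofFn fun i => ι F (v i)).prod = 0 := by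
  induction hu using Submodule.span_induction with
  | mem x hx =>
    obtain ⟨i, rfl⟩ := hx
    have := prod_dep (F := F) (k + 1) (Fin.cons (v i) v) (by
      intro h
      have := h.injective (a₁ := 0) (a₂ := i.succ) (by simp)
      exact absurd this (Fin.succ_ne_zero i).symm)
    simpa [List.ofFn_succ] using this
  | zero => simp
  | add x y _ _ h1 h2 => rw [map_add, add_mul, h1, h2, add_zero]
  | smul a x _ h => rw [map_smul, smul_mul_assoc, h, smul_zero]

theorem exists_kill (e : Basis (Fin 7) F M) (n : ℕ) (hn : n < 7) (u : Fin n → M) :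
    ∃ f : Dual F M, f ≠ 0 ∧ ∀ i, f (u i) = 0 := by
  have : Module.Finite F M := Module.Finite.of_basis e
  have h7 : finrank F M = 7 := by simpa using Module.finrank_eq_card_basis e
  have hlt : Submodule.span F (Set.range u) < ⊤ := by
    rw [lt_top_iff_ne_top]
    intro h
    have h1 := finrank_range_le_card (R := F) u
    rw [Set.finrank, h, finrank_top, h7] at h1
    simp at h1
    omega
  obtain ⟨f, hf, hk⟩ := Submodule.exists_le_ker_of_lt_top _ hlt
  exact ⟨f, hf, fun i => hk (Submodule.subset_span ⟨i, rfl⟩)⟩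

theorem exists_common (e : Basis (Fin 7) F M) (a b : Fin 4 → M) :
    ∃ v : M, v ≠ 0 ∧ ι F v * (List.ofFn fun i => ι F (a i)).prod = 0 ∧
      ι F v * (List.ofFn fun i => ι F (b i)).prod = 0 := by
  have : Module.Finite F M := Module.Finite.of_basis e
  have h7 : finrank F M = 7 := by simpa using Module.finrank_eq_card_basis e
  by_cases ha : LinearIndependent F a
  · by_cases hb : LinearIndependent F b
    · have h1 := finrank_span_eq_card ha
      have h2 := finrank_span_eq_card hb
      have h3 := Submodule.finrank_sup_add_finrank_inf_eq (Submodule.span F (Set.range a))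
        (Submodule.span F (Set.range b))
      have h4 := Submodule.finrank_le (Submodule.span F (Set.range a) ⊔ Submodule.span F (Set.range b))
      simp only [Fintype.card_fin] at h1 h2
      have h5 : (Submodule.span F (Set.range a) ⊓ Submodule.span F (Set.range b)) ≠ ⊥ := by
        intro h
        rw [h, finrank_bot] at h3
        omega
      obtain ⟨v, hv, hv0⟩ := Submodule.exists_mem_ne_zero_of_ne_bot h5
      exact ⟨v, hv0, span_mul_prod 4 a v hv.1, span_mul_prod 4 b v hv.2⟩
    · refine ⟨a 0, ha.ne_zero 0, span_mul_prod 4 a _ (Submodule.subset_span ⟨0, rfl⟩), ?_⟩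
      rw [prod_dep 4 b hb, mul_zero]
  · by_cases hb : LinearIndependent F b
    · refine ⟨b 0, hb.ne_zero 0, ?_, span_mul_prod 4 b _ (Submodule.subset_span ⟨0, rfl⟩)⟩
      rw [prod_dep 4 a ha, mul_zero]
    · exact ⟨e 0, e.ne_zero 0, by rw [prod_dep 4 a ha, mul_zero], by rw [prod_dep 4 b hb, mul_zero]⟩

theorem supp_top [CharZero F] (e : Basis (Fin 7) F M) (s : F) (hs : s = 1 ∨ s = -1) :
    supp 4 (PsiS s e) = ⊤ := by
  rw [supp, sInf_eq_top]
  intro W hW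
  by_contra hne
  obtain ⟨f, hf, hk⟩ := Submodule.exists_le_ker_of_lt_top W (lt_top_iff_ne_top.2 hne)
  have := ct_mem_pow W f (fun w hw => hk hw) 4 _ hW
  rcases wedge_ct e s hs (e 0) f (by rw [this, mul_zero]) with h | h
  · exact e.ne_zero 0 h
  · exact hf h

theorem rk_psi [CharZero F] (e : Basis (Fin 7) F M) (s : F) (hs : s = 1 ∨ s = -1) :
    rkInv 4 (PsiS s e) = 7 := by
  rw [rkInv, supp_top e s hs, finrank_top]
  simpa using Module.finrank_eq_card_basis e

theorem lenLE_succ (A : Submodule F M) (k l : ℕ) (X Y : ExteriorAlgebra F M)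
    (h : LenLE A k l X) (hY : Dec A k Y) : LenLE A k (l + 1) (X + Y) := by
  obtain ⟨Z, hZ, rfl⟩ := h
  refine ⟨Fin.snoc Z Y, fun i => ?_, by simp [Fin.sum_univ_castSucc]⟩
  refine Fin.lastCases ?_ (fun j => ?_) i
  · simpa using hY
  · simpa using hZ j

theorem lenLE_one (A : Submodule F M) (k : ℕ) (Y : ExteriorAlgebra F M)
    (hY : Dec A k Y) : LenLE A k 1 Y :=
  ⟨fun _ => Y, fun _ => hY, by simp⟩

theorem lenLE_mono (A : Submodule F M) (k l : ℕ) (X : ExteriorAlgebra F M)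
    (h : LenLE A (k + 1) l X) (n : ℕ) (hn : l ≤ n) : LenLE A (k + 1) n X := by
  induction n, hn using Nat.le_induction with
  | base => exact h
  | succ n _ ih =>
    have := lenLE_succ A (k + 1) n X 0 ih ⟨fun _ => 0, fun _ => A.zero_mem, by simp [List.ofFn_succ]⟩
    simpa using this

theorem len_eq (A : Submodule F M) (k l : ℕ) (X : ExteriorAlgebra F M)
    (h : LenLE A (k + 1) (l + 1) X) (h' : ¬ LenLE A (k + 1) l X) : len A (k + 1) X = l + 1 := by
  apply le_antisymm
  · exact Nat.sInf_le h
  · by_contra hlt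
    have := Nat.sInf_mem (s := {l | LenLE A (k + 1) l X}) ⟨_, h⟩
    exact h' (lenLE_mono A k _ X this l (by rw [len] at hlt; omega))

theorem mInv_eq_s7 (A : Submodule F M) (l : ℕ) (X : ExteriorAlgebra F M)
    (v : M) (W : Submodule F M) (X₁ X₂ : ExteriorAlgebra F M) (hS : Split 4 X v W X₁ X₂)
    (h : LenLE A 3 (l + 1) X₁)
    (h' : ∀ v W X₁ X₂, Split 4 X v W X₁ X₂ → ¬ LenLE A 3 l X₁) : mInv A 4 X = l + 1 := by
  have hm : l + 1 ∈ {l | ∃ v W X₁ X₂, Split 4 X v W X₁ X₂ ∧ HasLen A (4 - 1) l X₁} :=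
    ⟨v, W, X₁, X₂, hS, h, fun j hj hl => h' _ _ _ _ hS (lenLE_mono A 2 j X₁ hl l (by omega))⟩
  apply le_antisymm
  · exact Nat.sInf_le hm
  · by_contra hlt
    obtain ⟨v, W, X₁, X₂, hS, hl⟩ := Nat.sInf_mem ⟨_, hm⟩
    exact h' _ _ _ _ hS (lenLE_mono A 2 _ X₁ hl.1 l (by rw [mInv] at hlt; omega))

theorem rInv_eq_s7 (A : Submodule F M) (l : ℕ) (X : ExteriorAlgebra F M)
    (v : M) (W : Submodule F M) (X₁ X₂ : ExteriorAlgebra F M) (hS : Split 4 X v W X₁ X₂)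
    (h : LenLE A 4 (l + 1) X₂)
    (h' : ∀ v W X₁ X₂, Split 4 X v W X₁ X₂ → ¬ LenLE A 4 l X₂) : rInv A 4 X = l + 1 := by
  have hm : l + 1 ∈ {l | ∃ v W X₁ X₂, Split 4 X v W X₁ X₂ ∧ HasLen A 4 l X₂} :=
    ⟨v, W, X₁, X₂, hS, h, fun j hj hl => h' _ _ _ _ hS (lenLE_mono A 3 j X₂ hl l (by omega))⟩
  apply le_antisymm
  · exact Nat.sInf_le hm
  · by_contra hlt
    obtain ⟨v, W, X₁, X₂, hS, hl⟩ := Nat.sInf_mem ⟨_, hm⟩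
    exact h' _ _ _ _ hS (lenLE_mono A 3 _ X₂ hl.1 l (by rw [rInv] at hlt; omega))

theorem split_data (X : ExteriorAlgebra F M) (v : M) (W : Submodule F M)
    (X₁ X₂ : ExteriorAlgebra F M) (hS : Split 4 X v W X₁ X₂) :
    X = - (ι F v * X₁) + X₂ ∧ ∃ f : Dual F M, f ≠ 0 ∧ ct f X = - X₁ := by
  obtain ⟨-, hv, -, hW, h1, h2, h⟩ := hS
  have e1 : X = - (ι F v * X₁) + X₂ := by
    rw [h, mul_mem_pow W v 3 X₁ h1]
    norm_num [pow_succ]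
  have hvW : v ∉ W := by
    intro hm
    have : v ∈ W ⊓ Submodule.span F {v} := ⟨hm, Submodule.mem_span_singleton_self v⟩
    rw [hW] at this
    exact hv (by simpa using this)
  obtain ⟨g, hg, hk⟩ := Submodule.exists_le_ker_of_notMem hvW
  refine ⟨e1, (g v)⁻¹ • g, ?_, ?_⟩
  · intro h0
    have := congrArg (fun q : Dual F M => q v) h0
    simp [hg] at this
  · have hz : ∀ w ∈ W, ((g v)⁻¹ • g) w = 0 := by
      intro w hw
      have : g w = 0 := hk hw
      simp [this]
    rw [e1, map_add, map_neg, ct_ι_mul, ct_mem_pow W _ hz 3 X₁ h1, ct_mem_pow W _ hz 4 X₂ h2]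
    simp [hg]

theorem dec_one (A : Submodule F M) (k : ℕ) (X : ExteriorAlgebra F M) (h : LenLE A k 1 X) :
    ∃ p : Fin k → M, X = (List.ofFn fun i => ι F (p i)).prod := by
  obtain ⟨Y, hY, rfl⟩ := h
  obtain ⟨p, -, hp⟩ := hY 0
  exact ⟨p, by simpa using hp⟩

theorem not_len3 [CharZero F] (e : Basis (Fin 7) F M) (s : F) (hs : s = 1 ∨ s = -1)
    (A : Submodule F M) : ¬ LenLE A 4 3 (PsiS s e) := by
  rintro ⟨Y, hY, h⟩
  rw [Fin.sum_univ_three] at h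
  obtain ⟨a, -, ha⟩ := hY 0
  obtain ⟨b, -, hb⟩ := hY 1
  obtain ⟨c, -, hc⟩ := hY 2
  obtain ⟨v, hv, hva, hvb⟩ := exists_common e a b
  obtain ⟨f, hf, hk⟩ := exists_kill e 5 (by norm_num) (Fin.cons v c)
  have hfv : f v = 0 := by simpa using hk 0
  have hfc : ct f (Y 2) = 0 := by
    rw [hc]; exact ct_prod f 4 c fun i => by simpa using hk i.succ
  rw [← ha] at hva
  rw [← hb] at hvb
  have h1 := ct_ι_mul f v (Y 0)
  have h2 := ct_ι_mul f v (Y 1)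
  rw [hva, hfv, zero_smul, map_zero, zero_sub, eq_comm, neg_eq_zero] at h1
  rw [hvb, hfv, zero_smul, map_zero, zero_sub, eq_comm, neg_eq_zero] at h2
  rcases wedge_ct e s hs v f (by rw [h, map_add, map_add, hfc, add_zero, mul_add, h1, h2, add_zero]) with h | h
  · exact hv h
  · exact hf h

theorem not_r1 [CharZero F] (e : Basis (Fin 7) F M) (s : F) (hs : s = 1 ∨ s = -1)
    (A : Submodule F M) (v : M) (W : Submodule F M)
    (X₁ X₂ : ExteriorAlgebra F M) (hS : Split 4 (PsiS s e) v W X₁ X₂) : ¬ LenLE A 4 1 X₂ := by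
  intro hl
  obtain ⟨p, rfl⟩ := dec_one _ _ _ hl
  obtain ⟨h, -⟩ := split_data _ _ _ _ _ hS
  obtain ⟨f, hf, hk⟩ := exists_kill e 5 (by norm_num) (Fin.cons v p)
  have hfv : f v = 0 := by simpa using hk 0
  have hfc := ct_prod f 4 p fun i => by simpa using hk i.succ
  rcases wedge_ct e s hs v f (by
    rw [h, map_add, hfc, map_neg, ct_ι_mul, hfv]; simp [ι_sq_mul]) with h | h
  · exact hS.2.1 h
  · exact hf h

theorem not_m1 [CharZero F] (e : Basis (Fin 7) F M) (s : F) (hs : s = 1 ∨ s = -1)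
    (A : Submodule F M) (v : M) (W : Submodule F M)
    (X₁ X₂ : ExteriorAlgebra F M) (hS : Split 4 (PsiS s e) v W X₁ X₂) : ¬ LenLE A 3 1 X₁ := by
  intro hl
  obtain ⟨p, rfl⟩ := dec_one _ _ _ hl
  obtain ⟨-, f, hf, hX⟩ := split_data _ _ _ _ _ hS
  obtain ⟨u, hu, hup⟩ : ∃ u : M, u ≠ 0 ∧ ι F u * (List.ofFn fun i => ι F (p i)).prod = 0 := by
    by_cases hp : LinearIndependent F p
    · exact ⟨p 0, hp.ne_zero 0, span_mul_prod 3 p _ (Submodule.subset_span ⟨0, rfl⟩)⟩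
    · exact ⟨e 0, e.ne_zero 0, by rw [prod_dep 3 p hp, mul_zero]⟩
  rcases wedge_ct e s hs u f (by rw [hX, mul_neg, hup, neg_zero]) with h | h
  · exact hu h
  · exact hf h

end General

section Compact

open ExteriorAlgebra (ι)

variable {M : Type*} [AddCommGroup M] [Module ℝ M]

theorem wedge_ne (e : Basis (Fin 7) ℝ M) (v : M) (hv : v ≠ 0) : ι ℝ v * PsiS (1 : ℝ) e ≠ 0 := by
  intro h
  apply hv
  have h1 : ∀ k, ι ℝ (e k) * (ι ℝ v * PsiS (1 : ℝ) e) = 0 := fun k => by rw [h, mul_zero]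
  apply e.repr.injective
  ext j
  by_cases hj : j = 0
  · have := cross_zero e _ _ (h1 1) 1 j
    simpa [hj] using this
  · have := cross_zero e _ _ (h1 0) 0 j
    simpa [hj, Finsupp.single_apply, eq_comm] using this

theorem cross_par (e : Basis (Fin 7) ℝ M) (a b : M) (ha : a ≠ 0)
    (h : ι ℝ a * (ι ℝ b * PsiS (1 : ℝ) e) = 0) : ∃ c : ℝ, b = c • a := by
  have hc := cross_zero e a b h
  obtain ⟨i, hi⟩ : ∃ i, e.repr a i ≠ 0 := by
    by_contra! hn
    exact ha (e.repr.injective (by ext i; simpa using hn i))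
  refine ⟨e.repr b i / e.repr a i, e.repr.injective ?_⟩
  ext j
  have := hc i j
  simp only [map_smul, Finsupp.smul_apply, smul_eq_mul]
  field_simp
  linarith

theorem not_len4 (e : Basis (Fin 7) ℝ M) (A : Submodule ℝ M) :
    ¬ LenLE A 4 4 (PsiS (1 : ℝ) e) := by
  rintro ⟨Y, hY, h⟩
  rw [Fin.sum_univ_four] at h
  obtain ⟨a, -, ha⟩ := hY 0
  obtain ⟨b, -, hb⟩ := hY 1
  obtain ⟨c, -, hc⟩ := hY 2
  obtain ⟨d, -, hd⟩ := hY 3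
  obtain ⟨v, hv, hva, hvb⟩ := exists_common e a b
  obtain ⟨w, hw, hwc, hwd⟩ := exists_common e c d
  rw [← ha] at hva
  rw [← hb] at hvb
  rw [← hc] at hwc
  rw [← hd] at hwd
  have hz : ι ℝ v * (ι ℝ w * PsiS (1 : ℝ) e) = 0 := by
    rw [h]
    simp only [mul_add, hwc, hwd, add_zero]
    rw [ι_swap_mul, hva, ι_swap_mul, hvb]
    simp
  obtain ⟨t, rfl⟩ := cross_par e v w hv hz
  have ht : t ≠ 0 := by rintro rfl; simp at hw
  rw [map_smul, smul_mul_assoc, smul_eq_zero, or_iff_right ht] at hwc hwd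
  apply wedge_ne e v hv
  rw [h]
  simp only [mul_add, hva, hvb, hwc, hwd, add_zero]

theorem not_r2 (e : Basis (Fin 7) ℝ M) (A : Submodule ℝ M) (v : M) (W : Submodule ℝ M)
    (X₁ X₂ : ExteriorAlgebra ℝ M) (hS : Split 4 (PsiS (1 : ℝ) e) v W X₁ X₂) :
    ¬ LenLE A 4 2 X₂ := by
  rintro ⟨Y, hY, hX⟩
  rw [Fin.sum_univ_two] at hX
  obtain ⟨a, -, ha⟩ := hY 0
  obtain ⟨b, -, hb⟩ := hY 1
  obtain ⟨h, -⟩ := split_data _ _ _ _ _ hS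
  obtain ⟨w, hw, hva, hvb⟩ := exists_common e a b
  rw [← ha] at hva
  rw [← hb] at hvb
  have hwX : ι ℝ w * X₂ = 0 := by rw [hX, mul_add, hva, hvb, add_zero]
  have hvP : ι ℝ v * PsiS (1 : ℝ) e = ι ℝ v * X₂ := by
    rw [h, mul_add, mul_neg, ι_sq_mul]; simp
  have hz : ι ℝ w * (ι ℝ v * PsiS (1 : ℝ) e) = 0 := by
    rw [hvP, ι_swap_mul, hwX]; simp
  obtain ⟨t, ht⟩ := cross_par e w v hw hz
  apply wedge_ne e v hS.2.1
  rw [hvP, ht, map_smul, smul_mul_assoc, hwX, smul_zero]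

theorem not_m2 (e : Basis (Fin 7) ℝ M) (A : Submodule ℝ M) (v : M) (W : Submodule ℝ M)
    (X₁ X₂ : ExteriorAlgebra ℝ M) (hS : Split 4 (PsiS (1 : ℝ) e) v W X₁ X₂) :
    ¬ LenLE A 3 2 X₁ := by
  rintro ⟨Y, hY, hX⟩
  rw [Fin.sum_univ_two] at hX
  obtain ⟨a, -, ha⟩ := hY 0
  obtain ⟨b, -, hb⟩ := hY 1
  obtain ⟨-, f, hf, hfX⟩ := split_data _ _ _ _ _ hS
  obtain ⟨x, hx⟩ : ∃ x, f x ≠ 0 := by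
    by_contra! hn
    exact hf (LinearMap.ext hn)
  obtain ⟨g, hg, hk⟩ := exists_kill e 4 (by norm_num) (Fin.cons x a)
  have hgx : g x = 0 := by simpa using hk 0
  have hga : ct g (Y 0) = 0 := by
    rw [ha]; exact ct_prod g 3 a fun i => by simpa using hk i.succ
  have key := compact_m e f g (-(b 0)) (b 1) (b 2) (by
    rw [hfX, hX, map_neg, map_add, hga, zero_add, hb]
    simp [List.ofFn_succ])
  have key1 : ∀ i w, f (e i) * g w = f w * g (e i) := by
    intro i w
    have : f (e i) • g = g (e i) • f := e.ext fun j => by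
      simpa [mul_comm] using key i j
    have := congrArg (fun q : Dual ℝ M => q w) this
    simpa [mul_comm] using this
  apply hg
  apply e.ext
  intro i
  have := key1 i x
  rw [hgx, mul_zero, eq_comm, mul_eq_zero, or_iff_right hx] at this
  simpa using this

end Compact


section Upper

set_option linter.unusedSimpArgs false

open ExteriorAlgebra (ι)

variable {F : Type*} [Field F] {M : Type*} [AddCommGroup M] [Module F M]

theorem sw2 (u : Fin 7 → M) (i j : Fin 7) (_ : j < i) :
    ι F (u i) * ι F (u j) = - (ι F (u j) * ι F (u i)) := ι_swap _ _

theorem sw3 (u : Fin 7 → M) (i j : Fin 7) (_ : j < i) (X : ExteriorAlgebra F M) :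
    ι F (u i) * (ι F (u j) * X) = - (ι F (u j) * (ι F (u i) * X)) := ι_swap_mul _ _ _

theorem tri_mul (a b c z : M) :
    (ι F a * (ι F b * ι F c)) * ι F z = - (ι F z * (ι F a * (ι F b * ι F c))) := by
  rw [mul_assoc, mul_assoc, ι_swap c z, mul_neg, ι_swap_mul b z, neg_neg, ι_swap_mul a z]

theorem dec4 (a b c d : M) : Dec (⊤ : Submodule F M) 4 (ι F a * (ι F b * (ι F c * ι F d))) :=
  ⟨![a, b, c, d], fun _ => trivial, by simp [List.ofFn_succ]⟩

theorem dec3 (a b c : M) : Dec (⊤ : Submodule F M) 3 (ι F a * (ι F b * ι F c)) :=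
  ⟨![a, b, c], fun _ => trivial, by simp [List.ofFn_succ]⟩

theorem ker4 (f : Dual F M) (a b c d : M) (ha : f a = 0) (hb : f b = 0) (hc : f c = 0)
    (hd : f d = 0) : ι F a * (ι F b * (ι F c * ι F d)) ∈ ((LinearMap.ker f).map (ι F)) ^ 4 := by
  have := prod_mem_pow (LinearMap.ker f) 4 ![a, b, c, d] (by
    intro i; fin_cases i <;> simpa)
  simpa [List.ofFn_succ] using this

theorem ker3 (f : Dual F M) (a b c : M) (ha : f a = 0) (hb : f b = 0) (hc : f c = 0) :
    ι F a * (ι F b * ι F c) ∈ ((LinearMap.ker f).map (ι F)) ^ 3 := by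
  have := prod_mem_pow (LinearMap.ker f) 3 ![a, b, c] (by
    intro i; fin_cases i <;> simpa)
  simpa [List.ofFn_succ] using this

theorem split_mk (X : ExteriorAlgebra F M) (hX : supp 4 X = ⊤) (f : Dual F M) (v : M)
    (hf : f v = 1) (X₁ X₂ : ExteriorAlgebra F M)
    (h1 : X₁ ∈ ((LinearMap.ker f).map (ι F)) ^ 3) (h2 : X₂ ∈ ((LinearMap.ker f).map (ι F)) ^ 4)
    (h : X = X₁ * ι F v + X₂) : Split 4 X v (LinearMap.ker f) X₁ X₂ := by
  refine ⟨by rw [hX]; trivial, ?_, ?_, ?_, h1, h2, h⟩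
  · rintro rfl
    simp at hf
  · rw [hX, eq_top_iff]
    intro x _
    rw [Submodule.mem_sup]
    refine ⟨x - f x • v, by simp [hf], f x • v, Submodule.smul_mem _ _
      (Submodule.mem_span_singleton_self v), by simp⟩
  · rw [eq_bot_iff]
    rintro x ⟨hx, hx'⟩
    obtain ⟨c, rfl⟩ := Submodule.mem_span_singleton.1 hx'
    have : c = 0 := by simpa [hf] using hx
    simp [this]

theorem zorn (u : Fin 7 → M) (h b k : F) :
    (2 * h) • (ι F (u 0) * (ι F (u 1) * (ι F (u 3) * ι F (u 5))))
    + b • (ι F (u 0) * (ι F (u 2) * (ι F (u 4) * ι F (u 6))))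
    + (2 * h * k) • (ι F (u 1) * (ι F (u 2) * (ι F (u 3) * ι F (u 4)))
      + ι F (u 1) * (ι F (u 2) * (ι F (u 5) * ι F (u 6)))
      + ι F (u 3) * (ι F (u 4) * (ι F (u 5) * ι F (u 6))))
    = ι F ((2 * h * k) • u 3) * (ι F (u 4) * (ι F (u 5) * ι F (u 6)))
     + ι F (u 0) * (ι F (b • u 2 - (2 * h * k * k) • u 1) * (ι F (u 4) * ι F (u 6)))
     + ι F (-h • u 1) * (ι F (u 2 + u 0) * (ι F (u 3 + k • u 6) * ι F (u 5 - k • u 4)))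
     + ι F (h • u 1) * (ι F (u 2 - u 0) * (ι F (u 3 - k • u 6) * ι F (u 5 + k • u 4))) := by
  simp only [map_add, map_sub, map_smul, add_mul, mul_add, sub_mul, mul_sub, smul_mul_assoc,
    mul_smul_comm, smul_add, smul_sub, sw2 u, sw3 u, Fin.reduceLT, ι_sq_mul,
    ExteriorAlgebra.ι_sq_zero, mul_neg, smul_neg, mul_zero, smul_zero, neg_neg]
  module

theorem psim_zorn [CharZero F] (e : Fin 7 → M) : PsiS (-1 : F) e =
    (2 * (1 / 4 : F)) • (ι F (e 0) * (ι F (e 1 + e 6) * (ι F (e 2 - e 4) * ι F (e 3 + e 5))))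
    + (1 / 2 : F) • (ι F (e 0) * (ι F (e 1 - e 6) * (ι F (e 2 + e 4) * ι F (e 3 - e 5))))
    + (2 * (1 / 4) * (-1 / 2) : F) • (ι F (e 1 + e 6) * (ι F (e 1 - e 6) * (ι F (e 2 - e 4) * ι F (e 2 + e 4)))
      + ι F (e 1 + e 6) * (ι F (e 1 - e 6) * (ι F (e 3 + e 5) * ι F (e 3 - e 5)))
      + ι F (e 2 - e 4) * (ι F (e 2 + e 4) * (ι F (e 3 + e 5) * ι F (e 3 - e 5)))) := by
  simp only [PsiS, wedge4, mul_assoc, map_add, map_sub, map_smul, add_mul, mul_add, sub_mul, mul_sub, smul_mul_assoc,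
    mul_smul_comm, smul_add, smul_sub, sw2 e, sw3 e, Fin.reduceLT, ι_sq_mul,
    ExteriorAlgebra.ι_sq_zero, mul_neg, smul_neg, mul_zero, smul_zero, neg_neg]
  module

theorem psim_len [CharZero F] (e : Fin 7 → M) : LenLE ⊤ 4 4 (PsiS (-1 : F) e) := by
  have h := zorn ![e 0, e 1 + e 6, e 1 - e 6, e 2 - e 4, e 2 + e 4, e 3 + e 5, e 3 - e 5]
    (1 / 4 : F) (1 / 2) (-1 / 2)
  rw [psim_zorn]
  refine Eq.subst (motive := fun Z => LenLE ⊤ 4 4 Z) h.symm ?_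
  exact lenLE_succ _ _ _ _ _ (lenLE_succ _ _ _ _ _ (lenLE_succ _ _ _ _ _
    (lenLE_one _ _ _ (dec4 _ _ _ _)) (dec4 _ _ _ _)) (dec4 _ _ _ _)) (dec4 _ _ _ _)

theorem psim_all [CharZero F] (e : Basis (Fin 7) F M) :
    rkInv 4 (PsiMinus (F := F) e) = 7 ∧ len ⊤ 4 (PsiMinus (F := F) e) = 4 ∧
    mInv ⊤ 4 (PsiMinus (F := F) e) = 2 ∧ rInv ⊤ 4 (PsiMinus (F := F) e) = 2 := by
  rw [psiMinus_eq]
  have hs : (-1 : F) = 1 ∨ (-1 : F) = -1 := Or.inr rfl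
  refine ⟨rk_psi e _ hs, len_eq _ 3 3 _ (psim_len e) (not_len3 e _ hs _), ?_, ?_⟩
  · refine mInv_eq_s7 _ 1 _ (e 0) (LinearMap.ker (e.coord 0))
      (ι F ((-1 / 2 : F) • (e 1 + e 6)) * (ι F (e 2 - e 4) * ι F (e 3 + e 5))
        + ι F ((-1 / 2 : F) • (e 1 - e 6)) * (ι F (e 2 + e 4) * ι F (e 3 - e 5)))
      ((2 * (1 / 4) * (-1 / 2) : F) • (ι F (e 1 + e 6) * (ι F (e 1 - e 6) * (ι F (e 2 - e 4) * ι F (e 2 + e 4)))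
      + ι F (e 1 + e 6) * (ι F (e 1 - e 6) * (ι F (e 3 + e 5) * ι F (e 3 - e 5)))
      + ι F (e 2 - e 4) * (ι F (e 2 + e 4) * (ι F (e 3 + e 5) * ι F (e 3 - e 5)))))
      (split_mk _ (supp_top e _ hs) _ _ (by simp) _ _ ?_ ?_ ?_)
      (lenLE_succ _ _ _ _ _ (lenLE_one _ _ _ (dec3 _ _ _)) (dec3 _ _ _))
      (not_m1 e _ hs _)
    · apply add_mem <;> apply ker3 <;> simp
    · apply Submodule.smul_mem
      refine add_mem (add_mem ?_ ?_) ?_ <;> apply ker4 <;> simp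
    · rw [psim_zorn, add_mul, tri_mul, tri_mul]
      simp only [map_smul, smul_mul_assoc, mul_smul_comm]
      module
  · refine rInv_eq_s7 _ 1 _ (e 1 + e 6) (LinearMap.ker ((1 / 2 : F) • (e.coord 1 + e.coord 6)))
      (ι F ((1 / 2 : F) • e 0) * (ι F (e 2 - e 4) * ι F (e 3 + e 5))
        + (ι F ((1 / 4 : F) • (e 1 - e 6)) * (ι F (e 2 - e 4) * ι F (e 2 + e 4))
        + ι F ((1 / 4 : F) • (e 1 - e 6)) * (ι F (e 3 + e 5) * ι F (e 3 - e 5))))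
      (ι F ((-1 / 4 : F) • (e 2 - e 4)) * (ι F (e 2 + e 4) * (ι F (e 3 + e 5) * ι F (e 3 - e 5)))
      + ι F ((1 / 2 : F) • e 0) * (ι F (e 1 - e 6) * (ι F (e 2 + e 4) * ι F (e 3 - e 5))))
      (split_mk _ (supp_top e _ hs) _ _ (by simp [Finsupp.single_apply]; norm_num) _ _ ?_ ?_ ?_)
      (lenLE_succ _ _ _ _ _ (lenLE_one _ _ _ (dec4 _ _ _ _)) (dec4 _ _ _ _))
      (not_r1 e _ hs _)
    · refine add_mem ?_ (add_mem ?_ ?_) <;> apply ker3 <;> simp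
    · refine add_mem ?_ ?_ <;> apply ker4 <;> simp
    · rw [psim_zorn, add_mul, add_mul, tri_mul, tri_mul, tri_mul]
      simp only [map_smul, smul_mul_assoc, mul_smul_comm]
      rw [ι_swap_mul (e 0) (e 1 + e 6)]
      module

end Upper

section UpperReal

open ExteriorAlgebra (ι)

variable {M : Type*} [AddCommGroup M] [Module ℝ M]

theorem psip_len_eq (e : Fin 7 → M) : PsiS (1 : ℝ) e =
    ι ℝ (e 0) * (ι ℝ (e 1) * (ι ℝ (e 2) * ι ℝ (e 3)))
    + ι ℝ (e 0) * (ι ℝ (e 1) * (ι ℝ (e 4) * ι ℝ (e 5 - e 6)))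
    + ι ℝ (e 2) * (ι ℝ (e 3) * (ι ℝ (e 4) * ι ℝ (e 5 + (2 : ℝ) • e 6)))
    + ι ℝ ((1 / 2 : ℝ) • (e 0 - e 2 + e 3)) * (ι ℝ (e 1 + e 2 + e 3) * (ι ℝ (e 4 + e 5) * ι ℝ (e 6)))
    + ι ℝ ((1 / 2 : ℝ) • (e 0 - e 2 - e 3)) * (ι ℝ (e 1 - e 2 + e 3) * (ι ℝ (e 4 - e 5) * ι ℝ (e 6))) := by
  simp only [PsiS, wedge4, mul_assoc, map_add, map_sub, map_smul, add_mul, mul_add, sub_mul, mul_sub, smul_mul_assoc,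
    mul_smul_comm, smul_add, smul_sub, sw2 e, sw3 e, Fin.reduceLT, ι_sq_mul,
    ExteriorAlgebra.ι_sq_zero, mul_neg, smul_neg, mul_zero, smul_zero, neg_neg]
  module

theorem psip_split (e : Fin 7 → M) : PsiS (1 : ℝ) e =
    (ι ℝ (e 0) * (ι ℝ (e 3) * ι ℝ (e 4 - e 5))
      + ι ℝ (e 1) * (ι ℝ (e 2) * ι ℝ (e 4 + e 5))
      + ι ℝ (e 0 - e 1) * (ι ℝ (e 2 + e 3) * ι ℝ (e 5))) * ι ℝ (e 6)
    + (ι ℝ (e 0) * (ι ℝ (e 1) * (ι ℝ (e 2) * ι ℝ (e 3)))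
      + ι ℝ (e 0) * (ι ℝ (e 1) * (ι ℝ (e 4) * ι ℝ (e 5)))
      + ι ℝ (e 2) * (ι ℝ (e 3) * (ι ℝ (e 4) * ι ℝ (e 5)))) := by
  simp only [PsiS, wedge4, mul_assoc, map_add, map_sub, map_smul, add_mul, mul_add, sub_mul, mul_sub, smul_mul_assoc,
    mul_smul_comm, smul_add, smul_sub, sw2 e, sw3 e, Fin.reduceLT, ι_sq_mul,
    ExteriorAlgebra.ι_sq_zero, mul_neg, smul_neg, mul_zero, smul_zero, neg_neg]
  module

theorem psip_all (e : Basis (Fin 7) ℝ M) :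
    rkInv 4 (PsiPlus (F := ℝ) e) = 7 ∧ len ⊤ 4 (PsiPlus (F := ℝ) e) = 5 ∧
    mInv ⊤ 4 (PsiPlus (F := ℝ) e) = 3 ∧ rInv ⊤ 4 (PsiPlus (F := ℝ) e) = 3 := by
  rw [psiPlus_eq]
  have hs : (1 : ℝ) = 1 ∨ (1 : ℝ) = -1 := Or.inl rfl
  have hsp := split_mk _ (supp_top e (1 : ℝ) hs) (e.coord 6) (e 6) (by simp) _ _ (by
      refine add_mem (add_mem ?_ ?_) ?_ <;> apply ker3 <;> simp) (by
      refine add_mem (add_mem ?_ ?_) ?_ <;> apply ker4 <;> simp) (psip_split e)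
  refine ⟨rk_psi e _ hs, len_eq _ 3 4 _ ?_ (not_len4 e _), mInv_eq_s7 _ 2 _ _ _ _ _ hsp ?_
    (not_m2 e _), rInv_eq_s7 _ 2 _ _ _ _ _ hsp ?_ (not_r2 e _)⟩
  · rw [psip_len_eq]
    exact lenLE_succ _ _ _ _ _ (lenLE_succ _ _ _ _ _ (lenLE_succ _ _ _ _ _ (lenLE_succ _ _ _ _ _
      (lenLE_one _ _ _ (dec4 _ _ _ _)) (dec4 _ _ _ _)) (dec4 _ _ _ _)) (dec4 _ _ _ _))
      (dec4 _ _ _ _)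
  · exact lenLE_succ _ _ _ _ _ (lenLE_succ _ _ _ _ _
      (lenLE_one _ _ _ (dec3 _ _ _)) (dec3 _ _ _)) (dec3 _ _ _)
  · exact lenLE_succ _ _ _ _ _ (lenLE_succ _ _ _ _ _
      (lenLE_one _ _ _ (dec4 _ _ _ _)) (dec4 _ _ _ _)) (dec4 _ _ _ _)

end UpperReal

theorem psic_basis {M : Type*} [AddCommGroup M] [Module ℂ M] (E : Basis (Fin 7) ℂ M) :
    ∃ E' : Basis (Fin 7) ℂ M, PsiPlus (F := ℂ) E = PsiMinus (F := ℂ) E' := by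
  have hu : ∀ i, IsUnit ((![1, 1, 1, 1, Complex.I, Complex.I, -Complex.I] : Fin 7 → ℂ) i) := by
    intro i
    fin_cases i <;> simp
  refine ⟨E.isUnitSMul hu, ?_⟩
  simp only [PsiPlus, PsiMinus, wedge4, Basis.isUnitSMul_apply, map_smul, smul_mul_assoc,
    mul_smul_comm, smul_smul]
  simp
  try module

/-- For a seven-dimensional real vector space `V` with a basis
`e¹,…,e⁷` of `V*` one has `(ρ,l,m,r)(Ψ₊) = (7,5,3,3)` and `(ρ,l,m,r)(Ψ₋) = (7,4,2,2)`;
for a seven-dimensional complex vector space `W` with a basis `E¹,…,E⁷` of `W*` one has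
`(ρ,l,m,r)(Ψ_ℂ) = (7,4,2,2)`, where `Ψ_ℂ` is built from the `E^i` like `Ψ₊`. -/
theorem stmt7 {V : Type*} [AddCommGroup V] [Module ℝ V] [FiniteDimensional ℝ V]
    (hV : finrank ℝ V = 7) (e : Basis (Fin 7) ℝ (Module.Dual ℝ V))
    {W : Type*} [AddCommGroup W] [Module ℂ W] [FiniteDimensional ℂ W]
    (hW : finrank ℂ W = 7) (E : Basis (Fin 7) ℂ (Module.Dual ℂ W)) :
    (rkInv (F := ℝ) 4 (PsiPlus (F := ℝ) (⇑e)) = 7 ∧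
      len (⊤ : Submodule ℝ (Module.Dual ℝ V)) 4 (PsiPlus (F := ℝ) (⇑e)) = 5 ∧
      mInv (⊤ : Submodule ℝ (Module.Dual ℝ V)) 4 (PsiPlus (F := ℝ) (⇑e)) = 3 ∧
      rInv (⊤ : Submodule ℝ (Module.Dual ℝ V)) 4 (PsiPlus (F := ℝ) (⇑e)) = 3) ∧
    (rkInv (F := ℝ) 4 (PsiMinus (F := ℝ) (⇑e)) = 7 ∧
      len (⊤ : Submodule ℝ (Module.Dual ℝ V)) 4 (PsiMinus (F := ℝ) (⇑e)) = 4 ∧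
      mInv (⊤ : Submodule ℝ (Module.Dual ℝ V)) 4 (PsiMinus (F := ℝ) (⇑e)) = 2 ∧
      rInv (⊤ : Submodule ℝ (Module.Dual ℝ V)) 4 (PsiMinus (F := ℝ) (⇑e)) = 2) ∧
    (rkInv (F := ℂ) 4 (PsiPlus (F := ℂ) (⇑E)) = 7 ∧
      len (⊤ : Submodule ℂ (Module.Dual ℂ W)) 4 (PsiPlus (F := ℂ) (⇑E)) = 4 ∧
      mInv (⊤ : Submodule ℂ (Module.Dual ℂ W)) 4 (PsiPlus (F := ℂ) (⇑E)) = 2 ∧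
      rInv (⊤ : Submodule ℂ (Module.Dual ℂ W)) 4 (PsiPlus (F := ℂ) (⇑E)) = 2) := by
  refine ⟨psip_all e, psim_all e, ?_⟩
  obtain ⟨E', hE⟩ := psic_basis E
  rw [hE]
  exact psim_all E'
end
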